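/- arXiv:2103.08706 — 2 statements merged into one kernel-verified Lean document; each statement's English description precedes it below -/
import Mathlib

section
/- Let γ_t(x) be a C^∞ function on a neighborhood of (0,0) in ℝ^N×ℝ^n with γ_0(x) ≡ x. Then: (i) every element of ℒ(𝒫 ∪ 𝒩) is a finite linear combination with constant coefficients of elements of ℒ(𝒫̂ ∪ 𝒩̂) having the same degree, and every element of ℒ(𝒫) is such a combination of elements of ℒ(𝒫̂); (ii) conversely, every element of ℒ(𝒫̂ ∪ 𝒩̂) is a finite linear combination with constant coefficients of elements of ℒ(𝒫 ∪ 𝒩) having the same degree, and every element of ℒ(𝒫̂) is such a combination of elements of ℒ(𝒫). -/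
open MeasureTheory Metric Filter Set
open scoped ENNReal NNReal Topology

noncomputable section

namespace Zhang

/-- `ℝ^n` with the Euclidean norm. -/
abbrev Euc (n : ℕ) := EuclideanSpace ℝ (Fin n)

/-- Vector fields on `ℝ^n` (as everywhere-defined maps). -/
abbrev VF (n : ℕ) := Euc n → Euc n

/-- `ν`-parameter degrees. -/
abbrev Deg (ν : ℕ) := Fin ν → ℝ

variable {N ν n q : ℕ}

/-- Admissible multi-parameter dilation data `e = {e_1,…,e_N} ⊆ [0,∞)^ν`. -/
def AdmissibleE (e : Fin N → Fin ν → ℝ) : Prop :=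
  (∀ i μ, 0 ≤ e i μ) ∧ (∀ i, ∃ μ, e i μ ≠ 0) ∧ (∀ μ, ∃ i, e i μ ≠ 0)

/-- `δ^d = ∏_μ δ_μ^{d_μ}` (real exponents). -/
def dpow (δ d : Fin ν → ℝ) : ℝ := ∏ μ, δ μ ^ d μ

/-- The multi-parameter dilation `δ t = (δ^{e_1} t_1, …, δ^{e_N} t_N)`. -/
def dilate (e : Fin N → Fin ν → ℝ) (δ : Fin ν → ℝ) (t : Euc N) : Euc N :=
  (EuclideanSpace.equiv (Fin N) ℝ).symm fun i => dpow δ (e i) * t i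

/-- `ς^{(δ)}(t) = δ^{e_1+⋯+e_N} ς(δ t)`. -/
def scaled (e : Fin N → Fin ν → ℝ) (ς : Euc N → ℝ) (δ : Fin ν → ℝ) : Euc N → ℝ :=
  fun t => (∏ i, dpow δ (e i)) * ς (dilate e δ t)

/-- `2^k = (2^{k_1},…,2^{k_ν})`. -/
def twoPow (k : Fin ν → ℕ) : Fin ν → ℝ := fun μ => 2 ^ k μ

/-- The (global) `C^m` supremum norm of a function. -/
def CmSupNorm {E F : Type*} [NormedAddCommGroup E] [NormedSpace ℝ E]
    [NormedAddCommGroup F] [NormedSpace ℝ F] (m : ℕ) (f : E → F) : ℝ :=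
  ∑ j ∈ Finset.range (m + 1), ⨆ t, ‖iteratedFDeriv ℝ j f t‖

/-- The `C^m` supremum norm of a function on a set. -/
def CmSupNormOn {E F : Type*} [NormedAddCommGroup E] [NormedSpace ℝ E]
    [NormedAddCommGroup F] [NormedSpace ℝ F] (m : ℕ) (s : Set E) (f : E → F) : ℝ :=
  ∑ j ∈ Finset.range (m + 1), ⨆ t ∈ s, ‖iteratedFDerivWithin ℝ j f s t‖

/-- The cancellation condition: the integral of `g` in the coordinates `t_i` with
`e_i^μ ≠ 0` vanishes identically as a function of the remaining coordinates. -/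
def CancelCond (e : Fin N → Fin ν → ℝ) (μ : Fin ν) (g : Euc N → ℝ) : Prop :=
  ∀ t : Fin N → ℝ,
    haveI : DecidablePred fun i : Fin N => e i μ ≠ 0 := Classical.decPred _
    (∫ s : {i : Fin N // e i μ ≠ 0} → ℝ,
        g ((EuclideanSpace.equiv (Fin N) ℝ).symm fun i =>
          if h : e i μ ≠ 0 then s ⟨i, h⟩ else t i)) = 0

/-- Kernel data for the class `𝒦(N,e,a,ν)`: a sequence `{ς_k}_{k∈ℕ^ν}` bounded in
`C_c^∞(B^N(a))` satisfying the cancellation conditions. -/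
def IsKernelSeq (e : Fin N → Fin ν → ℝ) (a : ℝ) (ς : (Fin ν → ℕ) → Euc N → ℝ) : Prop :=
  (∀ k, ContDiff ℝ (⊤ : ℕ∞) (ς k)) ∧
  (∀ k, tsupport (ς k) ⊆ ball (0 : Euc N) a) ∧
  (∀ m, ∃ C : ℝ, ∀ k, CmSupNorm m (ς k) ≤ C) ∧
  (∀ k μ, k μ ≠ 0 → CancelCond e μ (ς k))

/-- Membership in the Fréchet space `𝒦̄(N,e,a,ν)` (closed ball support). -/
def MemKbar (e : Fin N → Fin ν → ℝ) (a : ℝ) (ς : (Fin ν → ℕ) → Euc N → ℝ) : Prop :=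
  (∀ k, ContDiff ℝ (⊤ : ℕ∞) (ς k)) ∧
  (∀ k, tsupport (ς k) ⊆ closedBall (0 : Euc N) a) ∧
  (∀ m, ∃ C : ℝ, ∀ k, CmSupNorm m (ς k) ≤ C) ∧
  (∀ k μ, k μ ≠ 0 → CancelCond e μ (ς k))

/-- The seminorm `‖{ς_k}‖_m = sup_k ‖ς_k‖_{C^m}` of `𝒦̄(N,e,a,ν)`. -/
def seqSeminorm (m : ℕ) (ς : (Fin ν → ℕ) → Euc N → ℝ) : ℝ :=
  ⨆ k, CmSupNorm m (ς k)

/-- The multi-indices `k ∈ ℕ^ν` with all coordinates `≤ M`. -/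
def trunc (ν M : ℕ) : Finset (Fin ν → ℕ) :=
  Finset.image (fun k : Fin ν → Fin (M + 1) => fun μ => (k μ : ℕ)) Finset.univ

/-- The partial-sum operators `f ↦ ψ(x) Σ_{|k|≤M} ∫ f(γ_t(x)) ς_k^{(2^k)}(t) dt`. -/
def partialOp (e : Fin N → Fin ν → ℝ) (γ : Euc N → Euc n → Euc n) (ψ : Euc n → ℝ)
    (ς : (Fin ν → ℕ) → Euc N → ℝ) (M : ℕ) (f : Euc n → ℝ) : Euc n → ℝ :=
  fun x => ψ x * ∑ k ∈ trunc ν M, ∫ t : Euc N, f (γ t x) * scaled e (ς k) (twoPow k) t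

/-- `T` is bounded on `L^p`: the partial-sum operators are bounded uniformly in `M`. -/
def OpBounded (p : ℝ) (e : Fin N → Fin ν → ℝ) (γ : Euc N → Euc n → Euc n)
    (ψ : Euc n → ℝ) (ς : (Fin ν → ℕ) → Euc N → ℝ) : Prop :=
  ∃ C : ℝ≥0, ∀ M : ℕ, ∀ f : Euc n → ℝ, ContDiff ℝ (⊤ : ℕ∞) f → HasCompactSupport f →
    eLpNorm (partialOp e γ ψ ς M f) (ENNReal.ofReal p) volume ≤
      C * eLpNorm f (ENNReal.ofReal p) volume

/-- All operators with small `ψ` and small kernels in `𝒦(N,e,a,ν)` are `L^p` bounded. -/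
def AllOpsBounded (p : ℝ) (e : Fin N → Fin ν → ℝ) (γ : Euc N → Euc n → Euc n) : Prop :=
  ∃ ε a : ℝ, 0 < ε ∧ 0 < a ∧
    ∀ ψ : Euc n → ℝ, ContDiff ℝ (⊤ : ℕ∞) ψ → HasCompactSupport ψ →
      tsupport ψ ⊆ ball (0 : Euc n) ε →
      ∀ ς : (Fin ν → ℕ) → Euc N → ℝ, IsKernelSeq e a ς → OpBounded p e γ ψ ς

/-! ### Vector fields, brackets, Carnot–Carathéodory geometry -/

/-- The Lie bracket of two vector fields. -/
def lieBracket (X Y : VF n) : VF n := fun x => fderiv ℝ Y x (X x) - fderiv ℝ X x (Y x)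

/-- `ℒ(S)`: the smallest set of (vector field, degree) pairs containing `S` and
closed under Lie brackets (adding degrees). -/
inductive LieGen (S : Set (VF n × Deg ν)) : VF n × Deg ν → Prop
  | base {P : VF n × Deg ν} : P ∈ S → LieGen S P
  | bracket {X Y : VF n} {d d' : Deg ν} : LieGen S (X, d) → LieGen S (Y, d') →
      LieGen S (lieBracket X Y, d + d')

def lieSpan (S : Set (VF n × Deg ν)) : Set (VF n × Deg ν) := {P | LieGen S P}

def unitCube (ν : ℕ) : Set (Fin ν → ℝ) := {δ | ∀ μ, 0 ≤ δ μ ∧ δ μ ≤ 1}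

def vecConst (ν : ℕ) (ξ : ℝ) : Fin ν → ℝ := fun _ => ξ

/-- `a` is a measurable control with `‖Σ_l |a_l|²‖_{L^∞[0,1]} < 1`. -/
def IsSubunit {ι : Type*} [Fintype ι] (a : ℝ → ι → ℝ) : Prop :=
  (∀ l, Measurable fun s => a s l) ∧
  ∃ c : ℝ, c < 1 ∧ ∀ᵐ s ∂(volume.restrict (Set.Icc (0 : ℝ) 1)), ∑ l, a s l ^ 2 ≤ c

/-- `g` is an absolutely continuous solution of `g' = Σ_l a_l δ^{d_l} X_l(g)`, `g(0)=x`,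
in integral form. -/
def SolvesODE {ι : Type*} [Fintype ι] (X : ι → VF n) (d : ι → Deg ν) (δ : Fin ν → ℝ)
    (a : ℝ → ι → ℝ) (x : Euc n) (g : ℝ → Euc n) : Prop :=
  g 0 = x ∧ ∀ u ∈ Set.Icc (0 : ℝ) 1,
    g u = x + ∫ s in (0 : ℝ)..u, ∑ l, a s l • dpow δ (d l) • X l (g s)

/-- The multi-parameter Carnot–Carathéodory ball `B_{(X,d)}(x,δ)` inside `Ω`. -/
def CCBall {ι : Type*} [Fintype ι] (X : ι → VF n) (d : ι → Deg ν) (Ω : Set (Euc n))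
    (x : Euc n) (δ : Fin ν → ℝ) : Set (Euc n) :=
  {y | ∃ (g : ℝ → Euc n) (a : ℝ → ι → ℝ), IsSubunit a ∧
      (∀ u ∈ Set.Icc (0 : ℝ) 1, g u ∈ Ω) ∧ SolvesODE X d δ a x g ∧ g 1 = y}

/-- `(X,d)` satisfies `𝒞(x,δ,Ω)`. -/
def SatC {ι : Type*} [Fintype ι] (X : ι → VF n) (d : ι → Deg ν) (x : Euc n)
    (δ : Fin ν → ℝ) (Ω : Set (Euc n)) : Prop :=
  ∀ a : ℝ → ι → ℝ, IsSubunit a →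
    ∃ g : ℝ → Euc n, (∀ u ∈ Set.Icc (0 : ℝ) 1, g u ∈ Ω) ∧ SolvesODE X d δ a x g

/-- The derivation of a scalar function along a vector field. -/
def derivAlong (Y : VF n) (f : Euc n → ℝ) : Euc n → ℝ := fun x => fderiv ℝ f x (Y x)

/-- `(δX)^α f`: iterated derivations indexed by the ordered multi-index `α`. -/
def derivList {ι : Type*} (X : ι → VF n) (w : ι → ℝ) (α : List ι) (f : Euc n → ℝ) :
    Euc n → ℝ :=
  α.foldr (fun l g => derivAlong (fun x => w l • X l x) g) f

/-- `(X,d)` controls `(X₀,d₀)` on `U` with parameter `ξ₁` (ambient `Ω`). -/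
def ControlsOn {ι : Type*} [Fintype ι] (X : ι → VF n) (d : ι → Deg ν)
    (Ω U : Set (Euc n)) (ξ₁ : ℝ) (X₀ : VF n) (d₀ : Deg ν) : Prop :=
  (∀ x ∈ U, SatC X d x (vecConst ν ξ₁) Ω) ∧
  ∃ c : Euc n → (Fin ν → ℝ) → ι → Euc n → ℝ,
    (∀ x ∈ U, ∀ δ ∈ unitCube ν, ∀ y ∈ CCBall X d Ω x (fun μ => ξ₁ * δ μ),
      dpow δ d₀ • X₀ y = ∑ l, c x δ l y • dpow δ (d l) • X l y) ∧
    (∀ x ∈ U, ∀ δ ∈ unitCube ν, ∀ l, ∀ α : List ι,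
      ContinuousOn (derivList X (fun l' => dpow δ (d l')) α (c x δ l))
        (CCBall X d Ω x (fun μ => ξ₁ * δ μ))) ∧
    (∀ m : ℕ, ∃ C : ℝ, ∀ x ∈ U, ∀ δ ∈ unitCube ν, ∀ l, ∀ α : List ι, α.length ≤ m →
      ∀ y ∈ CCBall X d Ω x (fun μ => ξ₁ * δ μ),
        |derivList X (fun l' => dpow δ (d l')) α (c x δ l) y| ≤ C)

/-- `(X,d)` controls `(X₀,d₀)` (some `U`, `ξ₁`), ambient `Ω`. -/
def ControlsPair {ι : Type*} [Fintype ι] (X : ι → VF n) (d : ι → Deg ν)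
    (Ω : Set (Euc n)) (X₀ : VF n) (d₀ : Deg ν) : Prop :=
  ∃ (U : Set (Euc n)) (ξ₁ : ℝ), IsOpen U ∧ (0 : Euc n) ∈ U ∧ U ⊆ Ω ∧ 0 < ξ₁ ∧
    ControlsOn X d Ω U ξ₁ X₀ d₀

/-- A finite set of pairs controls a pair (ambient neighborhood existentially quantified). -/
def FinsetControls (F : Finset (VF n × Deg ν)) (P : VF n × Deg ν) : Prop :=
  ∃ Ω : Set (Euc n), IsOpen Ω ∧ (0 : Euc n) ∈ Ω ∧
    ControlsPair (fun l : F => (l : VF n × Deg ν).1) (fun l : F => (l : VF n × Deg ν).2)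
      Ω P.1 P.2

/-- A set `S` of pairs controls a set `T`. -/
def SetControls (S T : Set (VF n × Deg ν)) : Prop :=
  ∃ F : Finset (VF n × Deg ν), ↑F ⊆ S ∧ ∀ P ∈ S ∪ T, FinsetControls F P

/-! ### Degrees, Taylor coefficients, exponential coefficients -/

def degMulti (e : Fin N → Fin ν → ℝ) (α : Fin N → ℕ) : Fin ν → ℝ :=
  fun μ => ∑ i, (α i : ℝ) * e i μ

/-- A degree is pure if it has exactly one nonzero coordinate. -/
def IsPureDeg (dg : Fin ν → ℝ) : Prop := ∃! μ, dg μ ≠ 0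

/-- `t^α`. -/
def monomial (α : Fin N → ℕ) (t : Euc N) : ℝ := ∏ i, t i ^ α i

/-- The multi-indices `α` with `|α| < M`. -/
def multiIdxLt (N M : ℕ) : Finset (Fin N → ℕ) :=
  (trunc N M).filter fun α => ∑ i, α i < M

/-- `X` is the family of Taylor coefficient vector fields of `W` at `t = 0`, on `U`. -/
def IsTaylorFieldOf (W : Euc N → Euc n → Euc n) (U : Set (Euc n))
    (X : (Fin N → ℕ) → VF n) : Prop :=
  X 0 = 0 ∧ (∀ α, ContDiffOn ℝ (⊤ : ℕ∞) (X α) U) ∧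
  ∀ M : ℕ, ∃ C ε : ℝ, 0 < ε ∧ ∀ t ∈ ball (0 : Euc N) ε, ∀ x ∈ U,
    ‖W t x - ∑ α ∈ multiIdxLt N M, monomial α t • X α x‖ ≤ C * ‖t‖ ^ M

/-- `W(t,x) = (d/dε)|_{ε=1} γ_{εt}(γ_t⁻¹(x))` on `B^N(ρ) × U`. -/
def IsWFor (γ : Euc N → Euc n → Euc n) (ρ : ℝ) (U : Set (Euc n))
    (W : Euc N → Euc n → Euc n) : Prop :=
  ∃ γinv : Euc N → Euc n → Euc n,
    (∀ t ∈ ball (0 : Euc N) ρ, ∀ x ∈ U, γ t (γinv t x) = x ∧ γinv t (γ t x) = x) ∧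
    ∀ t ∈ ball (0 : Euc N) ρ, ∀ x ∈ U,
      HasDerivAt (fun ε : ℝ => γ (ε • t) (γinv t x)) (W t x) 1

/-- `y` is the time-one flow of the vector field `V` from `x`. -/
def FlowsTo (V : VF n) (x y : Euc n) : Prop :=
  ∃ φ : ℝ → Euc n, φ 0 = x ∧ φ 1 = y ∧ ∀ s ∈ Set.Icc (0 : ℝ) 1, HasDerivAt φ (V (φ s)) s

/-- `Xh` is the family of exponential coefficient vector fields of `γ`:
`γ_t(x) = e^{Σ_{0<|α|<M} t^α X̂_α} x + O(|t|^M)` for every `M`. -/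
def IsExpFieldsFor (γ : Euc N → Euc n → Euc n) (U : Set (Euc n))
    (Xh : (Fin N → ℕ) → VF n) : Prop :=
  Xh 0 = 0 ∧ (∀ α, ContDiffOn ℝ (⊤ : ℕ∞) (Xh α) U) ∧
  ∀ M : ℕ, ∃ C ε : ℝ, 0 < ε ∧ ∀ t ∈ ball (0 : Euc N) ε, ∀ x ∈ U,
    ∃ y : Euc n, FlowsTo (fun z => ∑ α ∈ multiIdxLt N M, monomial α t • Xh α z) x y ∧
      ‖γ t x - y‖ ≤ C * ‖t‖ ^ M

/-- The pure power set `𝒫` of a family of coefficient fields. -/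
def pureSet (e : Fin N → Fin ν → ℝ) (X : (Fin N → ℕ) → VF n) : Set (VF n × Deg ν) :=
  {P | ∃ α : Fin N → ℕ, α ≠ 0 ∧ IsPureDeg (degMulti e α) ∧ P = (X α, degMulti e α)}

/-- The nonpure power set `𝒩` of a family of coefficient fields. -/
def nonpureSet (e : Fin N → Fin ν → ℝ) (X : (Fin N → ℕ) → VF n) : Set (VF n × Deg ν) :=
  {P | ∃ α : Fin N → ℕ, α ≠ 0 ∧ ¬ IsPureDeg (degMulti e α) ∧ P = (X α, degMulti e α)}

/-! ### Strong control -/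

/-- `(X,d)` strongly controls `(X₀,d₀)`. -/
def StrongControlsOn {ι : Type*} [Fintype ι] (X : ι → VF n) (d : ι → Deg ν)
    (X₀ : VF n) (d₀ : Deg ν) : Prop :=
  ∃ (U V : Set (Euc n)) (c : ι → Euc n → ℝ),
    IsOpen U ∧ (0 : Euc n) ∈ U ∧ IsOpen V ∧ closure U ⊆ V ∧
    (∀ l, ContDiffOn ℝ (⊤ : ℕ∞) (c l) V) ∧
    (∀ l, ¬ (∀ μ, d l μ ≤ d₀ μ) → c l = 0) ∧
    (∀ x ∈ U, X₀ x = ∑ l, c l x • X l x)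

/-- A finite set of pairs strongly controls a pair. -/
def FinsetStrongControls (F : Finset (VF n × Deg ν)) (P : VF n × Deg ν) : Prop :=
  StrongControlsOn (fun l : F => (l : VF n × Deg ν).1) (fun l : F => (l : VF n × Deg ν).2)
    P.1 P.2

/-- `(X,d)` strongly controls `W(t,x)`. -/
def StrongControlsW {ι : Type*} [Fintype ι] (X : ι → VF n) (d : ι → Deg ν)
    (e : Fin N → Fin ν → ℝ) (W : Euc N → Euc n → Euc n) : Prop :=
  ∃ (ρ' : ℝ) (U : Set (Euc n)) (V : Set (Euc N × Euc n)) (A : Finset (Fin N → ℕ))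
    (c : ι → (Fin N → ℕ) → Euc N → Euc n → ℝ),
    0 < ρ' ∧ IsOpen U ∧ (0 : Euc n) ∈ U ∧ IsOpen V ∧
    closure (ball (0 : Euc N) ρ' ×ˢ U) ⊆ V ∧
    (∀ l α, ContDiffOn ℝ (⊤ : ℕ∞) (fun p : Euc N × Euc n => c l α p.1 p.2) V) ∧
    (∀ l α, degMulti e α ≠ d l → c l α = 0) ∧
    (∀ t ∈ ball (0 : Euc N) ρ', ∀ x ∈ U,
      W t x = ∑ l, ∑ α ∈ A, (c l α t x * monomial α t) • X l x)

/-- A finite set of pairs strongly controls `W`. -/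
def FinsetStrongControlsW (F : Finset (VF n × Deg ν)) (e : Fin N → Fin ν → ℝ)
    (W : Euc N → Euc n → Euc n) : Prop :=
  StrongControlsW (fun l : F => (l : VF n × Deg ν).1) (fun l : F => (l : VF n × Deg ν).2)
    e W

/-! ### Control of `W` -/

/-- `∂_{t_i}` applied to a function of `(t,u)`. -/
def derivTAlong (i : Fin N) (f : Euc N → Euc n → ℝ) : Euc N → Euc n → ℝ :=
  fun t u => fderiv ℝ (fun s => f s u) t (EuclideanSpace.single i (1 : ℝ))

/-- Iterated `t`-partials indexed by an ordered multi-index. -/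
def derivTList (β : List (Fin N)) (f : Euc N → Euc n → ℝ) : Euc N → Euc n → ℝ :=
  β.foldr derivTAlong f

/-- Iterated `u`-derivations along scaled vector fields. -/
def derivUList {ι : Type*} (X : ι → VF n) (w : ι → ℝ) (β : List ι)
    (f : Euc N → Euc n → ℝ) : Euc N → Euc n → ℝ :=
  fun t => derivList X w β (f t)

/-- `(X,d)` controls `W` on `U` for `t ∈ B^N(ρ')` with parameter `ξ₁` (ambient `Ω`). -/
def ControlsWOn {ι : Type*} [Fintype ι] (X : ι → VF n) (d : ι → Deg ν)
    (e : Fin N → Fin ν → ℝ) (Ω U : Set (Euc n)) (ρ' ξ₁ : ℝ)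
    (W : Euc N → Euc n → Euc n) : Prop :=
  (∀ x ∈ U, SatC X d x (vecConst ν ξ₁) Ω) ∧
  ∃ c : Euc n → (Fin ν → ℝ) → ι → Euc N → Euc n → ℝ,
    (∀ x ∈ U, ∀ δ ∈ unitCube ν, ∀ t ∈ ball (0 : Euc N) ρ',
      ∀ u ∈ CCBall X d Ω x (fun μ => ξ₁ * δ μ),
        W (dilate e δ t) u = ∑ l, c x δ l t u • dpow δ (d l) • X l u) ∧
    (∀ x ∈ U, ∀ δ ∈ unitCube ν, ∀ l, ∀ β' : List (Fin N), ∀ β : List ι,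
      ContinuousOn
        (fun p : Euc N × Euc n =>
          derivTList β' (derivUList X (fun l' => dpow δ (d l')) β (c x δ l)) p.1 p.2)
        (ball (0 : Euc N) ρ' ×ˢ CCBall X d Ω x (fun μ => ξ₁ * δ μ))) ∧
    (∀ m : ℕ, ∃ C : ℝ, ∀ x ∈ U, ∀ δ ∈ unitCube ν, ∀ l, ∀ β' : List (Fin N), ∀ β : List ι,
      β'.length + β.length ≤ m → ∀ t ∈ ball (0 : Euc N) ρ',
        ∀ u ∈ CCBall X d Ω x (fun μ => ξ₁ * δ μ),
          |derivTList β' (derivUList X (fun l' => dpow δ (d l')) β (c x δ l)) t u| ≤ C)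

/-- `(X,d)` controls `W` (some `ρ' ≤ ρ`, `ξ₁`, `U`), ambient `Ω`. -/
def ControlsW {ι : Type*} [Fintype ι] (X : ι → VF n) (d : ι → Deg ν)
    (e : Fin N → Fin ν → ℝ) (Ω : Set (Euc n)) (ρ : ℝ)
    (W : Euc N → Euc n → Euc n) : Prop :=
  ∃ (ρ' ξ₁ : ℝ) (U : Set (Euc n)), 0 < ρ' ∧ ρ' ≤ ρ ∧ 0 < ξ₁ ∧ IsOpen U ∧
    (0 : Euc n) ∈ U ∧ U ⊆ Ω ∧ ControlsWOn X d e Ω U ρ' ξ₁ W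

end Zhang

open Zhang

/-- `P` is a finite linear combination, with constant coefficients, of elements of `S`
having the same degree as `P` (on a common neighborhood of `0`). -/
def IsConstCombOf {n ν : ℕ} (S : Set (VF n × Deg ν)) (P : VF n × Deg ν) : Prop :=
  ∃ (k : ℕ) (c : Fin k → ℝ) (Y : Fin k → VF n),
    (∀ j, (Y j, P.2) ∈ S) ∧
    ∃ U : Set (Euc n), IsOpen U ∧ (0 : Euc n) ∈ U ∧ ∀ x ∈ U, P.1 x = ∑ j, c j • Y j x

/-
Vector fields act on smooth functions as derivations, so `A = ∑ t^α X̂_α` and `X = ∑ t^α X_α` are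
formal power series over an associative algebra. Along every ray `s ↦ s t` a smooth `f` satisfies
`f (γ_{st} x) ∼ (e^A f)(x)`, while by definition of `W` one has
`s ∂_s f (γ_{st} x) = (W f)(γ_{st} x)`. Comparing expansions gives `E e^A = e^A X`, where `E` is the
Euler operator multiplying the coefficient of `t^α` by `|α|`.

Since `E` is a derivation, `e^{-A} E e^A = ∑_j D_j / (j + 1)!` with `D_0 = E A` and
`D_{j+1} = [D_j, A]`. Hence `X_α` is `|α| X̂_α` plus a combination of iterated brackets of those
`X̂_β` with `|β| < |α|` whose multi-indices add up to `α`, and induction on `|α|` gives both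
inclusions, with degrees preserved. As degrees are nonzero and nonnegative, a pure degree is a sum
of pure degrees only, so the same induction applies to `𝒫` and `𝒫̂` alone.
-/

open Finset.HasAntidiagonal (antidiagonal)

section IteratedBracket

variable {R : Type*} [Ring R]

/-- The iterated bracket `[⋯[[b, a], a]⋯, a]` with `j` entries `a`. -/
def iterBracket (a b : R) (j : ℕ) : R := (fun c => ⁅c, a⁆)^[j] b

lemma iterBracket_zero (a b : R) : iterBracket a b 0 = b := rfl

lemma iterBracket_succ (a b : R) (j : ℕ) :
    iterBracket a b (j + 1) = ⁅iterBracket a b j, a⁆ :=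
  Function.iterate_succ_apply' ..

lemma pow_mul_iterBracket_mul (a b : R) (i j : ℕ) :
    a ^ i * iterBracket a b j * a =
      a ^ (i + 1) * iterBracket a b j + a ^ i * iterBracket a b (j + 1) := by
  rw [iterBracket_succ, Ring.lie_def]
  noncomm_ring

/-- `E` is a derivation of the (noncommutative) ring `R`. -/
def IsRingDerivation (E : R →+ R) : Prop := ∀ a b, E (a * b) = E a * b + a * E b

lemma IsRingDerivation.map_one {E : R →+ R} (hE : IsRingDerivation E) : E 1 = 0 := by
  simpa using hE 1 1

lemma IsRingDerivation.map_pow_succ {E : R →+ R} (hE : IsRingDerivation E) (a : R) (m : ℕ) :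
    E (a ^ (m + 1)) = ∑ x ∈ antidiagonal m,
      (m + 1).choose (x.2 + 1) • (a ^ x.1 * iterBracket a (E a) x.2) := by
  induction m with
  | zero => simp [iterBracket_zero]
  | succ m ih =>
    set D := iterBracket a (E a)
    have shift_fst : ∑ x ∈ antidiagonal m, (m + 1).choose (x.2 + 1) • (a ^ (x.1 + 1) * D x.2)
        = ∑ x ∈ antidiagonal (m + 1), (m + 1).choose (x.2 + 1) • (a ^ x.1 * D x.2) := by
      simp [Finset.Nat.sum_antidiagonal_succ]
    have shift_snd : a ^ (m + 1) * D 0 +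
        ∑ x ∈ antidiagonal m, (m + 1).choose (x.2 + 1) • (a ^ x.1 * D (x.2 + 1))
        = ∑ x ∈ antidiagonal (m + 1), (m + 1).choose x.2 • (a ^ x.1 * D x.2) := by
      rw [Finset.Nat.sum_antidiagonal_succ', Nat.choose_zero_right, one_smul, add_comm]
    calc E (a ^ (m + 1 + 1))
        = E (a ^ (m + 1)) * a + a ^ (m + 1) * D 0 := by rw [pow_succ, hE]; rfl
      _ = ∑ x ∈ antidiagonal m, (m + 1).choose (x.2 + 1) • (a ^ (x.1 + 1) * D x.2)
          + (a ^ (m + 1) * D 0 + ∑ x ∈ antidiagonal m,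
              (m + 1).choose (x.2 + 1) • (a ^ x.1 * D (x.2 + 1))) := by
        rw [ih, Finset.sum_mul]
        simp only [smul_mul_assoc, pow_mul_iterBracket_mul, smul_add, Finset.sum_add_distrib, D]
        abel
      _ = ∑ x ∈ antidiagonal (m + 1),
            (m + 1 + 1).choose (x.2 + 1) • (a ^ x.1 * D x.2) := by
        rw [shift_fst, shift_snd, ← Finset.sum_add_distrib]
        refine Finset.sum_congr rfl fun x _ => ?_
        rw [Nat.choose_succ_succ' (m + 1), add_smul, add_comm]

end IteratedBracket

section FormalExponential

lemma sum_filter_add_lt_eq_sum_antidiagonal {G : Type*} [AddCommMonoid G] (M : ℕ)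
    (F : ℕ × ℕ → G) :
    ∑ x ∈ Finset.range M ×ˢ Finset.range M with x.1 + x.2 < M, F x =
      ∑ m ∈ Finset.range M, ∑ x ∈ antidiagonal m, F x := by
  rw [Finset.sum_sigma']
  refine Finset.sum_bij' (fun x _ => ⟨x.1 + x.2, x⟩) (fun y _ => y.2) ?_ ?_ (fun _ _ => rfl) ?_
    fun _ _ => rfl
  · intro x hx
    simp_all
  · rintro ⟨m, x⟩ hx
    simp only [Finset.mem_sigma, Finset.mem_range, Finset.HasAntidiagonal.mem_antidiagonal] at hx
    simp only [Finset.mem_filter, Finset.mem_product, Finset.mem_range]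
    omega
  · rintro ⟨m, x⟩ hx
    obtain ⟨-, rfl⟩ := by simpa using hx
    rfl

variable {σ R : Type*}

/-- The formal sum of a family of power series in which `f m` has order at least `m`; only the
terms `m ≤ |α|` then contribute to the coefficient of `t^α`. -/
def orderSum [Semiring R] (f : ℕ → MvPowerSeries σ R) : MvPowerSeries σ R :=
  fun α => ∑ m ∈ Finset.range (α.degree + 1), MvPowerSeries.coeff α (f m)

lemma coeff_orderSum [Semiring R] (f : ℕ → MvPowerSeries σ R) (α : σ →₀ ℕ) :
    MvPowerSeries.coeff α (orderSum f) =
      ∑ m ∈ Finset.range (α.degree + 1), MvPowerSeries.coeff α (f m) := rfl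

lemma coeff_orderSum_of_lt [Semiring R] {f : ℕ → MvPowerSeries σ R} (hf : ∀ m, m ≤ (f m).order)
    {α : σ →₀ ℕ} {M : ℕ} (hM : α.degree < M) :
    MvPowerSeries.coeff α (orderSum f) = ∑ m ∈ Finset.range M, MvPowerSeries.coeff α (f m) :=
  Finset.sum_subset (Finset.range_subset_range.2 hM) fun m _ hm =>
    MvPowerSeries.coeff_of_lt_order <|
      lt_of_lt_of_le (by simpa using hm) (hf m)

lemma orderSum_eq_orderSum_succ [Semiring R] {f : ℕ → MvPowerSeries σ R} (h0 : f 0 = 0)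
    (hf : ∀ m, m ≤ (f m).order) : orderSum f = orderSum fun m => f (m + 1) := by
  ext α
  rw [coeff_orderSum_of_lt hf (M := α.degree + 1 + 1) (by omega), Finset.sum_range_succ', h0,
    map_zero, add_zero, coeff_orderSum]

lemma orderSum_mul_orderSum [Semiring R] {f g : ℕ → MvPowerSeries σ R}
    (hf : ∀ m, m ≤ (f m).order) (hg : ∀ m, m ≤ (g m).order) :
    orderSum f * orderSum g = orderSum fun m => ∑ x ∈ antidiagonal m, f x.1 * g x.2 := by
  classical
  ext α
  have coeff_fg : ∀ x : ℕ × ℕ, α.degree < x.1 + x.2 → MvPowerSeries.coeff α (f x.1 * g x.2) = 0 :=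
    fun x hx => MvPowerSeries.coeff_of_lt_order <| by
      refine lt_of_lt_of_le ?_ ((add_le_add (hf x.1) (hg x.2)).trans MvPowerSeries.le_order_mul)
      exact_mod_cast hx
  set M := α.degree + 1
  calc MvPowerSeries.coeff α (orderSum f * orderSum g)
      = ∑ x ∈ Finset.range M ×ˢ Finset.range M, MvPowerSeries.coeff α (f x.1 * g x.2) := by
        simp only [MvPowerSeries.coeff_mul]
        rw [Finset.sum_comm]
        refine Finset.sum_congr rfl fun y hy => ?_
        have hdeg : y.1.degree + y.2.degree = α.degree := by
          rw [← map_add, Finset.HasAntidiagonal.mem_antidiagonal.1 hy]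
        rw [coeff_orderSum_of_lt hf (M := M) (by omega),
          coeff_orderSum_of_lt hg (M := M) (by omega), Finset.sum_mul_sum, Finset.sum_product]
    _ = ∑ m ∈ Finset.range M, ∑ x ∈ antidiagonal m, MvPowerSeries.coeff α (f x.1 * g x.2) := by
        rw [← sum_filter_add_lt_eq_sum_antidiagonal, Finset.sum_filter_of_ne]
        exact fun x _ hx => Nat.lt_succ_of_le (not_lt.1 (mt (coeff_fg x) hx))
    _ = MvPowerSeries.coeff α (orderSum fun m => ∑ x ∈ antidiagonal m, f x.1 * g x.2) := by
        simp only [coeff_orderSum, map_sum, M]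

/-- The Euler operator `∑ i, t_i ∂/∂t_i` on power series, multiplying the coefficient of `t^α`
by `|α|`. -/
def euler [Semiring R] : MvPowerSeries σ R →+ MvPowerSeries σ R where
  toFun p := fun α => α.degree • MvPowerSeries.coeff α p
  map_zero' := by ext α; exact smul_zero _
  map_add' p q := by ext α; exact smul_add _ _ _

@[simp] lemma coeff_euler [Semiring R] (p : MvPowerSeries σ R) (α : σ →₀ ℕ) :
    MvPowerSeries.coeff α (euler p) = α.degree • MvPowerSeries.coeff α p := rfl

lemma euler_orderSum [Semiring R] (f : ℕ → MvPowerSeries σ R) :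
    euler (orderSum f) = orderSum fun m => euler (f m) := by
  ext α
  simp only [coeff_euler, coeff_orderSum, Finset.smul_sum]

lemma isRingDerivation_euler [Ring R] :
    IsRingDerivation (euler : MvPowerSeries σ R →+ MvPowerSeries σ R) := by
  classical
  intro p q
  ext α
  simp only [coeff_euler, map_add, MvPowerSeries.coeff_mul, Finset.smul_sum,
    ← Finset.sum_add_distrib]
  refine Finset.sum_congr rfl fun x hx => ?_
  rw [← Finset.HasAntidiagonal.mem_antidiagonal.1 hx, map_add, smul_mul_assoc, mul_smul_comm,
    add_smul]

lemma order_le_order_euler [Semiring R] (p : MvPowerSeries σ R) : p.order ≤ (euler p).order :=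
  MvPowerSeries.le_order fun α hα => by
    rw [coeff_euler, MvPowerSeries.coeff_of_lt_order hα, smul_zero]

variable {𝕜 : Type*} [Field 𝕜] [Ring R] [Algebra 𝕜 R]

lemma coeff_algebra_smul (c : 𝕜) (p : MvPowerSeries σ R) (α : σ →₀ ℕ) :
    MvPowerSeries.coeff α (c • p) = c • MvPowerSeries.coeff α p := rfl

lemma order_le_order_algebra_smul (c : 𝕜) (p : MvPowerSeries σ R) : p.order ≤ (c • p).order :=
  MvPowerSeries.le_order fun α hα => by
    rw [coeff_algebra_smul, MvPowerSeries.coeff_of_lt_order hα, smul_zero]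

lemma order_add_order_le_order_lie (p q : MvPowerSeries σ R) :
    p.order + q.order ≤ ⁅p, q⁆.order :=
  MvPowerSeries.le_order fun α hα => by
    rw [Ring.lie_def, map_sub,
      MvPowerSeries.coeff_of_lt_order (hα.trans_le MvPowerSeries.le_order_mul),
      MvPowerSeries.coeff_of_lt_order
        (hα.trans_le (add_comm q.order _ ▸ MvPowerSeries.le_order_mul)), sub_zero]

lemma le_order_iterBracket {p q : MvPowerSeries σ R} (hp : p.constantCoeff = 0)
    (hq : q.constantCoeff = 0) (j : ℕ) : (j + 1 : ℕ) ≤ (iterBracket p q j).order := by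
  induction j with
  | zero => simpa [iterBracket_zero, MvPowerSeries.one_le_order_iff_constCoeff_eq_zero] using hq
  | succ j ih =>
    rw [iterBracket_succ, Nat.cast_succ]
    exact (add_le_add ih (MvPowerSeries.one_le_order_iff_constCoeff_eq_zero.2 hp)).trans
      (order_add_order_le_order_lie _ _)

variable (𝕜) in
/-- The exponential `∑_m A^m / m!` of a power series without constant term. -/
def formalExp (A : MvPowerSeries σ R) : MvPowerSeries σ R :=
  orderSum fun m => (m.factorial : 𝕜)⁻¹ • A ^ m

variable (𝕜) in
/-- The logarithmic derivative `e^{-A} E(e^A) = ∑_j [⋯[E A, A]⋯, A] / (j + 1)!` of the exponential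
of a power series `A` without constant term, `E` being the Euler operator. -/
def logDerivExp (A : MvPowerSeries σ R) : MvPowerSeries σ R :=
  orderSum fun j => ((j + 1).factorial : 𝕜)⁻¹ • iterBracket A (euler A) j

lemma le_order_smul_pow {A : MvPowerSeries σ R} (hA : A.constantCoeff = 0) (c : 𝕜) (m : ℕ) :
    m ≤ (c • A ^ m).order :=
  (MvPowerSeries.le_order_pow_of_constantCoeff_eq_zero m hA).trans
    (order_le_order_algebra_smul _ _)

lemma constantCoeff_euler (A : MvPowerSeries σ R) : (euler A).constantCoeff = 0 := by
  rw [← MvPowerSeries.coeff_zero_eq_constantCoeff_apply, coeff_euler, map_zero, zero_smul]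

lemma le_order_smul_iterBracket_euler {A : MvPowerSeries σ R} (hA : A.constantCoeff = 0) (c : 𝕜)
    (j : ℕ) : (j + 1 : ℕ) ≤ (c • iterBracket A (euler A) j).order :=
  (le_order_iterBracket hA (constantCoeff_euler A) j).trans (order_le_order_algebra_smul _ _)

lemma isUnit_formalExp (A : MvPowerSeries σ R) : IsUnit (formalExp 𝕜 A) := by
  have : (formalExp 𝕜 A).constantCoeff = 1 := by
    rw [← MvPowerSeries.coeff_zero_eq_constantCoeff_apply]
    simp [formalExp, coeff_orderSum]
  rw [MvPowerSeries.isUnit_iff_constantCoeff, this]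
  exact isUnit_one

lemma euler_smul_pow_succ [CharZero 𝕜] (A : MvPowerSeries σ R) (m : ℕ) :
    euler (((m + 1).factorial : 𝕜)⁻¹ • A ^ (m + 1)) = ∑ x ∈ antidiagonal m,
      (x.1.factorial : 𝕜)⁻¹ • A ^ x.1 *
        ((x.2 + 1).factorial : 𝕜)⁻¹ • iterBracket A (euler A) x.2 := by
  have euler_smul : ∀ (c : 𝕜) (p : MvPowerSeries σ R), euler (c • p) = c • euler p :=
    fun c p => by ext α; simp only [coeff_euler, coeff_algebra_smul, smul_comm c]
  rw [euler_smul, isRingDerivation_euler.map_pow_succ, Finset.smul_sum]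
  refine Finset.sum_congr rfl fun x hx => ?_
  rw [smul_mul_smul_comm, ← Nat.cast_smul_eq_nsmul 𝕜, smul_smul]
  congr 1
  obtain rfl := Finset.HasAntidiagonal.mem_antidiagonal.1 hx
  have hchoose : ((x.1 + (x.2 + 1)).choose (x.2 + 1) : 𝕜) * x.1.factorial * (x.2 + 1).factorial =
      (x.1 + (x.2 + 1)).factorial := mod_cast Nat.add_choose_mul_factorial_mul_factorial x.1 _
  have hfac : ∀ k : ℕ, (k.factorial : 𝕜) ≠ 0 := fun k => Nat.cast_ne_zero.2 k.factorial_ne_zero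
  rw [← mul_inv, add_assoc]
  field_simp [hfac]
  linear_combination hchoose

lemma euler_formalExp [CharZero 𝕜] {A : MvPowerSeries σ R} (hA : A.constantCoeff = 0) :
    euler (formalExp 𝕜 A) = formalExp 𝕜 A * logDerivExp 𝕜 A := by
  rw [formalExp, logDerivExp, orderSum_mul_orderSum (fun m => le_order_smul_pow hA _ m)
    fun j => (Nat.cast_le.2 j.le_succ).trans (le_order_smul_iterBracket_euler hA _ j)]
  simp only [← euler_smul_pow_succ]
  rw [euler_orderSum, orderSum_eq_orderSum_succ]
  · simp [isRingDerivation_euler.map_one]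
  · exact fun m => (le_order_smul_pow hA _ m).trans (order_le_order_euler _)

lemma eq_logDerivExp [CharZero 𝕜] {A X : MvPowerSeries σ R} (hA : A.constantCoeff = 0)
    (h : euler (formalExp 𝕜 A) = formalExp 𝕜 A * X) : X = logDerivExp 𝕜 A :=
  (isUnit_formalExp A).mul_left_cancel (h.symm.trans (euler_formalExp hA))

end FormalExponential

section LieGrading

variable {σ R 𝕜 : Type*} [Field 𝕜] [Ring R] [Algebra 𝕜 R]

/-- A family of subspaces indexed by multi-indices whose members of nonzero index are compatible
with commutators. -/
def IsLieGraded (𝓛 : (σ →₀ ℕ) → Submodule 𝕜 R) : Prop :=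
  ∀ ⦃β γ⦄, β ≠ 0 → γ ≠ 0 → ∀ ⦃a b⦄, a ∈ 𝓛 β → b ∈ 𝓛 γ → ⁅a, b⁆ ∈ 𝓛 (β + γ)

/-- The coefficient of `t^α` in `p` lies in `𝓛 α` for every `|α| < k`. -/
def CoeffMem (𝓛 : (σ →₀ ℕ) → Submodule 𝕜 R) (k : ℕ) (p : MvPowerSeries σ R) : Prop :=
  ∀ α : σ →₀ ℕ, α.degree < k → MvPowerSeries.coeff α p ∈ 𝓛 α

variable {𝓛 : (σ →₀ ℕ) → Submodule 𝕜 R} {k : ℕ} {p q A X : MvPowerSeries σ R}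

lemma CoeffMem.mono {l : ℕ} (hp : CoeffMem 𝓛 k p) (hl : l ≤ k) : CoeffMem 𝓛 l p :=
  fun α hα => hp α (hα.trans_le hl)

lemma CoeffMem.map_euler (hp : CoeffMem 𝓛 k p) : CoeffMem 𝓛 k (euler p) :=
  fun α hα => by
    rw [coeff_euler]
    exact nsmul_mem (hp α hα) _

lemma coeff_lie [DecidableEq σ] (p q : MvPowerSeries σ R) (α : σ →₀ ℕ) :
    MvPowerSeries.coeff α ⁅p, q⁆ =
      ∑ x ∈ antidiagonal α, ⁅MvPowerSeries.coeff x.1 p, MvPowerSeries.coeff x.2 q⁆ := by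
  simp only [Ring.lie_def, map_sub, MvPowerSeries.coeff_mul, Finset.sum_sub_distrib]
  congr 1
  exact Finset.sum_equiv (Equiv.prodComm _ _) (by simp [add_comm]) (by simp)

lemma CoeffMem.lie (h𝓛 : IsLieGraded 𝓛) (hp0 : p.constantCoeff = 0) (hq0 : q.constantCoeff = 0)
    (hp : CoeffMem 𝓛 k p) (hq : CoeffMem 𝓛 k q) : CoeffMem 𝓛 (k + 1) ⁅p, q⁆ := by
  classical
  intro α hα
  rw [coeff_lie]
  refine Submodule.sum_mem _ fun x hx => ?_
  obtain rfl := Finset.HasAntidiagonal.mem_antidiagonal.1 hx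
  rcases eq_or_ne x.1 0 with h1 | h1
  · simp [h1, Ring.lie_def, hp0]
  rcases eq_or_ne x.2 0 with h2 | h2
  · simp [h2, Ring.lie_def, hq0]
  have hd1 : x.1.degree ≠ 0 := mt (Finsupp.degree_eq_zero_iff _).1 h1
  have hd2 : x.2.degree ≠ 0 := mt (Finsupp.degree_eq_zero_iff _).1 h2
  rw [map_add] at hα
  exact h𝓛 h1 h2 (hp _ (by omega)) (hq _ (by omega))

lemma constantCoeff_iterBracket (hq0 : q.constantCoeff = 0) (j : ℕ) :
    (iterBracket p q j).constantCoeff = 0 := by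
  induction j with
  | zero => exact hq0
  | succ j ih => rw [iterBracket_succ, Ring.lie_def]; simp [ih]

lemma coeffMem_iterBracket_succ (h𝓛 : IsLieGraded 𝓛) (hp0 : p.constantCoeff = 0)
    (hq0 : q.constantCoeff = 0) (hp : CoeffMem 𝓛 k p) (hq : CoeffMem 𝓛 k q) (j : ℕ) :
    CoeffMem 𝓛 (k + 1) (iterBracket p q (j + 1)) := by
  induction j with
  | zero => exact hq.lie h𝓛 hq0 hp0 hp
  | succ j ih =>
    rw [iterBracket_succ]
    exact (ih.mono k.le_succ).lie h𝓛 (constantCoeff_iterBracket hq0 _) hp0 hp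

lemma CoeffMem.logDerivExp_sub_euler (h𝓛 : IsLieGraded 𝓛) (hA0 : A.constantCoeff = 0)
    (hA : CoeffMem 𝓛 k A) : CoeffMem 𝓛 (k + 1) (logDerivExp 𝕜 A - euler A) := by
  intro α hα
  rw [logDerivExp, map_sub, coeff_orderSum, Finset.sum_range_succ']
  simp only [coeff_algebra_smul, iterBracket_zero, zero_add, Nat.factorial_one, Nat.cast_one,
    inv_one, one_smul, add_sub_cancel_right]
  exact Submodule.sum_mem _ fun j _ => Submodule.smul_mem _ _ <|
    coeffMem_iterBracket_succ h𝓛 hA0 (constantCoeff_euler A) hA hA.map_euler j α hα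

/-- The coefficients of degree `|α|` of `X` and `E A` differ by brackets of coefficients of `A` of
lower degree. -/
theorem coeff_mem_iff_of_euler_formalExp [CharZero 𝕜] (h𝓛 : IsLieGraded 𝓛)
    (hA0 : A.constantCoeff = 0) (h : euler (formalExp 𝕜 A) = formalExp 𝕜 A * X) :
    (∀ α, MvPowerSeries.coeff α A ∈ 𝓛 α) ↔ ∀ α, MvPowerSeries.coeff α X ∈ 𝓛 α := by
  rw [eq_logDerivExp hA0 h]
  refine ⟨fun hA α => ?_, fun hX => ?_⟩
  · have hA' : CoeffMem 𝓛 α.degree A := fun β _ => hA β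
    have := add_mem (hA'.logDerivExp_sub_euler h𝓛 hA0 α (Nat.lt_succ_self _))
      (CoeffMem.map_euler (k := α.degree + 1) (fun β _ => hA β) α (Nat.lt_succ_self _))
    rwa [← map_add, sub_add_cancel] at this
  · suffices ∀ k, CoeffMem 𝓛 k A from fun α => this _ α (Nat.lt_succ_self _)
    intro k
    induction k with
    | zero => exact fun α hα => absurd hα (Nat.not_lt_zero _)
    | succ k ih =>
      intro α hα
      rcases eq_or_ne α 0 with rfl | h0
      · simp [hA0]
      have hmem := sub_mem (hX α) (ih.logDerivExp_sub_euler h𝓛 hA0 α hα)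
      rw [← map_sub, sub_sub_cancel, coeff_euler, ← Nat.cast_smul_eq_nsmul 𝕜] at hmem
      refine (Submodule.smul_mem_iff _ (Nat.cast_ne_zero.2 ?_)).1 hmem
      rwa [Ne, Finsupp.degree_eq_zero_iff]

end LieGrading

section RestrictionToLines

variable {σ 𝕜 E R : Type*} [Fintype σ] [DecidableEq σ]

/-- The homogeneous component `∑_{|α| = k} t^α c_α` of degree `k`, evaluated at `t`, of the
polynomial or power series with coefficients `c`. -/
def homEval [CommSemiring 𝕜] [AddCommMonoid E] [Module 𝕜 E] (t : σ → 𝕜) (k : ℕ)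
    (c : (σ →₀ ℕ) → E) : E :=
  ∑ α ∈ Finset.finsuppAntidiag Finset.univ k, (∏ i, t i ^ α i) • c α

lemma mem_finsuppAntidiag_univ {k : ℕ} {α : σ →₀ ℕ} :
    α ∈ Finset.finsuppAntidiag Finset.univ k ↔ α.degree = k := by
  simp [Finset.mem_finsuppAntidiag, Finsupp.degree_eq_sum]

lemma homEval_zero_left [CommSemiring 𝕜] [AddCommMonoid E] [Module 𝕜 E] (t : σ → 𝕜)
    (c : (σ →₀ ℕ) → E) : homEval t 0 c = c 0 := by
  simp [homEval]

lemma map_homEval [CommSemiring 𝕜] [AddCommMonoid E] [Module 𝕜 E] {F : Type*} [AddCommMonoid F]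
    [Module 𝕜 F] (φ : E →ₗ[𝕜] F) (t : σ → 𝕜) (k : ℕ) (c : (σ →₀ ℕ) → E) :
    φ (homEval t k c) = homEval t k fun α => φ (c α) := by
  simp only [homEval, map_sum, map_smul]

lemma homEval_mul [CommSemiring 𝕜] [Semiring R] [Algebra 𝕜 R] (t : σ → 𝕜) (k : ℕ)
    (p q : MvPowerSeries σ R) :
    homEval t k (fun α => MvPowerSeries.coeff α (p * q)) =
      ∑ x ∈ antidiagonal k, homEval t x.1 (fun α => MvPowerSeries.coeff α p) *
        homEval t x.2 (fun α => MvPowerSeries.coeff α q) := by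
  simp only [homEval, Finset.sum_mul_sum, MvPowerSeries.coeff_mul, Finset.smul_sum,
    ← Finset.sum_product']
  rw [Finset.sum_sigma', Finset.sum_sigma']
  refine Finset.sum_bij' (fun x _ => ⟨(x.2.1.degree, x.2.2.degree), x.2⟩)
    (fun x _ => ⟨x.2.1 + x.2.2, x.2⟩) ?_ ?_ ?_ ?_ ?_
  · rintro ⟨α, β, γ⟩ h
    simp only [Finset.mem_sigma, mem_finsuppAntidiag_univ, Finset.HasAntidiagonal.mem_antidiagonal,
      Finset.mem_product, and_true] at h ⊢
    rw [← map_add, h.2, h.1]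
  · rintro ⟨⟨i, j⟩, β, γ⟩ h
    simp only [Finset.mem_sigma, mem_finsuppAntidiag_univ, Finset.HasAntidiagonal.mem_antidiagonal,
      Finset.mem_product, and_true] at h ⊢
    rw [map_add, h.2.1, h.2.2, h.1]
  · rintro ⟨α, β, γ⟩ h
    simp only [Finset.mem_sigma, Finset.HasAntidiagonal.mem_antidiagonal] at h ⊢
    rw [h.2]
  · rintro ⟨⟨i, j⟩, β, γ⟩ h
    simp only [Finset.mem_sigma, mem_finsuppAntidiag_univ, Finset.mem_product] at h ⊢
    rw [h.2.1, h.2.2]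
  · rintro ⟨α, β, γ⟩ h
    simp only [Finset.mem_sigma, Finset.HasAntidiagonal.mem_antidiagonal] at h ⊢
    rw [smul_mul_smul_comm, ← Finset.prod_mul_distrib, ← h.2]
    simp only [Finsupp.coe_add, Pi.add_apply, pow_add]

lemma eq_zero_of_forall_homEval_eq_zero [Field 𝕜] [Infinite 𝕜] [AddCommGroup E] [Module 𝕜 E]
    {k : ℕ} {c : (σ →₀ ℕ) → E} (h : ∀ t : σ → 𝕜, homEval t k c = 0) {α : σ →₀ ℕ}
    (hα : α.degree = k) : c α = 0 := by
  refine (Module.forall_dual_apply_eq_zero_iff 𝕜 _).1 fun φ => ?_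
  have hpoly : ∑ β ∈ Finset.finsuppAntidiag Finset.univ k,
      MvPolynomial.monomial β (φ (c β)) = 0 := by
    refine MvPolynomial.funext fun t => ?_
    have := map_homEval φ t k c
    rw [h t, map_zero] at this
    rw [map_zero, this, map_sum]
    refine Finset.sum_congr rfl fun β _ => ?_
    rw [MvPolynomial.eval_monomial, Finsupp.prod_fintype _ _ (by simp), smul_eq_mul, mul_comm]
  have hcoeff := congrArg (MvPolynomial.coeff α) hpoly
  rwa [MvPolynomial.coeff_sum, MvPolynomial.coeff_zero, Finset.sum_eq_single α,
    MvPolynomial.coeff_monomial, if_pos rfl] at hcoeff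
  · exact fun β _ hβ => by rw [MvPolynomial.coeff_monomial, if_neg hβ]
  · exact fun h => absurd (mem_finsuppAntidiag_univ.2 hα) h

/-- The restriction `∑_k s^k ∑_{|α| = k} t^α p_α` of a power series `p` to the line
`s ↦ (s t_i)_i`. -/
def restrictLine [CommSemiring 𝕜] [Semiring R] [Algebra 𝕜 R] (t : σ → 𝕜) :
    MvPowerSeries σ R →+* PowerSeries R where
  toFun p := PowerSeries.mk fun k => homEval t k fun α => MvPowerSeries.coeff α p
  map_zero' := by ext k; simp [homEval]
  map_add' p q := by ext k; simp [homEval, Finset.sum_add_distrib]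
  map_mul' p q := by ext k; simp only [PowerSeries.coeff_mk, homEval_mul, PowerSeries.coeff_mul]
  map_one' := by
    ext k
    rcases eq_or_ne k 0 with rfl | hk
    · simp [homEval_zero_left]
    · rw [PowerSeries.coeff_mk, PowerSeries.coeff_one, if_neg hk]
      refine Finset.sum_eq_zero fun α hα => ?_
      rw [mem_finsuppAntidiag_univ] at hα
      have hα0 : α ≠ 0 := by rintro rfl; exact hk (by simpa using hα.symm)
      simp only [MvPowerSeries.coeff_one, if_neg hα0, smul_zero]

section

variable [Field 𝕜] [Ring R] [Algebra 𝕜 R] (t : σ → 𝕜)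

lemma coeff_restrictLine (p : MvPowerSeries σ R) (k : ℕ) :
    PowerSeries.coeff k (restrictLine t p) = homEval t k fun α => MvPowerSeries.coeff α p :=
  PowerSeries.coeff_mk k fun k => homEval t k fun α => MvPowerSeries.coeff α p

lemma eq_of_forall_restrictLine_eq [Infinite 𝕜] {p q : MvPowerSeries σ R}
    (h : ∀ t : σ → 𝕜, restrictLine t p = restrictLine t q) : p = q := by
  ext α
  rw [← sub_eq_zero, ← map_sub]
  refine eq_zero_of_forall_homEval_eq_zero (c := fun α => MvPowerSeries.coeff α (p - q))
    (fun t : σ → 𝕜 => ?_) rfl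
  rw [← coeff_restrictLine, map_sub, h t, sub_self, map_zero]

lemma coeff_euler_powerSeries (p : PowerSeries R) (k : ℕ) :
    PowerSeries.coeff k (euler p) = k • PowerSeries.coeff k p := by
  rw [PowerSeries.coeff, coeff_euler, Finsupp.degree_single]

lemma coeff_formalExp (a : PowerSeries R) (k : ℕ) :
    PowerSeries.coeff k (formalExp 𝕜 a) =
      ∑ m ∈ Finset.range (k + 1), (m.factorial : 𝕜)⁻¹ • PowerSeries.coeff k (a ^ m) := by
  rw [PowerSeries.coeff, formalExp, coeff_orderSum, Finsupp.degree_single]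
  rfl

lemma coeff_formalExp_of_lt {a : PowerSeries R} (ha : a.constantCoeff = 0) {k M : ℕ}
    (hk : k < M) :
    PowerSeries.coeff k (formalExp 𝕜 a) =
      ∑ m ∈ Finset.range M, (m.factorial : 𝕜)⁻¹ • PowerSeries.coeff k (a ^ m) := by
  rw [PowerSeries.coeff, formalExp,
    coeff_orderSum_of_lt (fun m => le_order_smul_pow ha _ m) (by rwa [Finsupp.degree_single])]
  rfl

lemma restrictLine_euler (p : MvPowerSeries σ R) :
    restrictLine t (euler p) = euler (restrictLine t p) := by
  ext k
  rw [coeff_restrictLine, coeff_euler_powerSeries, coeff_restrictLine, homEval, homEval,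
    Finset.smul_sum]
  refine Finset.sum_congr rfl fun α hα => ?_
  rw [coeff_euler, mem_finsuppAntidiag_univ.1 hα, smul_comm]

lemma restrictLine_formalExp (A : MvPowerSeries σ R) :
    restrictLine t (formalExp 𝕜 A) = formalExp 𝕜 (restrictLine t A) := by
  ext k
  simp only [coeff_restrictLine, coeff_formalExp, ← map_pow, homEval, Finset.smul_sum]
  rw [Finset.sum_comm]
  refine Finset.sum_congr rfl fun α hα => ?_
  rw [formalExp, coeff_orderSum, mem_finsuppAntidiag_univ.1 hα, Finset.smul_sum]
  refine Finset.sum_congr rfl fun m _ => ?_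
  rw [coeff_algebra_smul, smul_comm]

lemma euler_formalExp_eq_of_forall_restrictLine [Infinite 𝕜] {A X : MvPowerSeries σ R}
    (h : ∀ t : σ → 𝕜, euler (formalExp 𝕜 (restrictLine t A)) =
      formalExp 𝕜 (restrictLine t A) * restrictLine t X) :
    euler (formalExp 𝕜 A) = formalExp 𝕜 A * X :=
  eq_of_forall_restrictLine_eq (𝕜 := 𝕜) fun t => by
    rw [restrictLine_euler, map_mul, restrictLine_formalExp, h]

end

end RestrictionToLines

section OneSidedExpansions

variable {E : Type*}

/-- The Taylor polynomial `∑_{k < M} s^k c_k`. -/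
def taylorSum [AddCommGroup E] [Module ℝ E] (M : ℕ) (c : ℕ → E) (s : ℝ) : E :=
  ∑ k ∈ Finset.range M, s ^ k • c k

lemma map_taylorSum [AddCommGroup E] [Module ℝ E] {F : Type*} [AddCommGroup F] [Module ℝ F]
    (φ : E →ₗ[ℝ] F) (M : ℕ) (c : ℕ → E) (s : ℝ) :
    φ (taylorSum M c s) = taylorSum M (fun k => φ (c k)) s := by
  simp only [taylorSum, map_sum, map_smul]

lemma taylorSum_succ [AddCommGroup E] [Module ℝ E] (M : ℕ) (c : ℕ → E) (s : ℝ) :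
    taylorSum (M + 1) c s = s • taylorSum M (fun k => c (k + 1)) s + c 0 := by
  simp only [taylorSum, Finset.sum_range_succ', Finset.smul_sum, smul_smul, pow_succ', pow_zero,
    one_smul]

variable [NormedAddCommGroup E] [NormedSpace ℝ E]

lemma isBigO_taylorSum_pow_succ {ι : Type*} {l : Filter ι} {s : ι → ℝ} {c : ℕ → ι → E} {m : ℕ}
    (hs : s =O[l] fun _ => (1 : ℝ)) (h0 : c 0 = 0) (hc : ∀ k, c k =O[l] fun i => s i ^ m) (M : ℕ) :
    (fun i => taylorSum M (fun k => c k i) (s i)) =O[l] fun i => s i ^ (m + 1) := by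
  refine .fun_sum fun k _ => ?_
  rcases k with _ | k
  · simpa [h0] using Asymptotics.isBigO_zero (fun i => s i ^ (m + 1)) l
  · have hpow : (fun i => s i ^ (k + 1)) =O[l] s := by
      simpa [pow_succ'] using (Asymptotics.isBigO_refl s l).mul (hs.pow k)
    simpa [pow_succ'] using hpow.smul (hc (k + 1))

lemma hasDerivAt_taylorSum_succ (M : ℕ) (c : ℕ → E) (s : ℝ) :
    HasDerivAt (taylorSum (M + 1) c)
      (taylorSum M (fun k => ((k + 1 : ℕ) : ℝ) • c (k + 1)) s) s := by
  have hterm : ∀ k, HasDerivAt (fun s : ℝ => s ^ k • c k) (((k : ℝ) * s ^ (k - 1)) • c k) s :=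
    fun k => (hasDerivAt_pow k s).smul_const (c k)
  have hsum := HasDerivAt.fun_sum fun k (_ : k ∈ Finset.range (M + 1)) => hterm k
  refine hsum.congr_deriv ?_
  simp [Finset.sum_range_succ', taylorSum, smul_smul, mul_comm]

lemma tendsto_taylorSum_succ (M : ℕ) (c : ℕ → E) :
    Tendsto (taylorSum (M + 1) c) (𝓝[>] 0) (𝓝 (c 0)) :=
  tendsto_nhdsWithin_of_tendsto_nhds (by
    simpa [taylorSum_succ] using (hasDerivAt_taylorSum_succ M c 0).continuousAt.tendsto)

lemma tendsto_pow_succ_nhdsGT_zero (M : ℕ) :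
    Tendsto (fun s : ℝ => s ^ (M + 1)) (𝓝[>] 0) (𝓝 0) :=
  tendsto_nhdsWithin_of_tendsto_nhds (by simpa using (continuous_pow (M + 1)).tendsto (0 : ℝ))

lemma eq_zero_of_isBigO_taylorSum_pow {M : ℕ} {c : ℕ → E}
    (hc : taylorSum M c =O[𝓝[>] 0] fun s : ℝ => s ^ M) {k : ℕ} (hk : k < M) : c k = 0 := by
  induction M generalizing c k with
  | zero => exact absurd hk k.not_lt_zero
  | succ M ih =>
    have hc0 : c 0 = 0 :=
      tendsto_nhds_unique (tendsto_taylorSum_succ M c)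
        (hc.trans_tendsto (tendsto_pow_succ_nhdsGT_zero M))
    cases k with
    | zero => exact hc0
    | succ k =>
      refine ih (c := fun k => c (k + 1)) ?_ (Nat.succ_lt_succ_iff.1 hk)
      have hdiv := (Asymptotics.isBigO_refl (fun s : ℝ => s⁻¹) (𝓝[>] 0)).smul hc
      refine hdiv.congr' ?_ ?_ <;> filter_upwards [self_mem_nhdsWithin] with s (hs : 0 < s)
      · rw [taylorSum_succ, hc0, add_zero, inv_smul_smul₀ hs.ne']
      · rw [smul_eq_mul, pow_succ', inv_mul_cancel_left₀ hs.ne']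

lemma norm_sub_taylorSum_le {u : ℕ → ℝ → E}
    (hu : ∀ j, ∀ s ∈ Icc (0 : ℝ) 1, HasDerivWithinAt (u j) (u (j + 1) s) (Icc 0 1) s)
    {M : ℕ} {B : ℝ} (hB : ∀ s ∈ Icc (0 : ℝ) 1, ‖u M s‖ ≤ B) {s : ℝ} (hs : s ∈ Icc (0 : ℝ) 1) :
    ‖u 0 s - taylorSum M (fun j => (j.factorial : ℝ)⁻¹ • u j 0) s‖ ≤ B := by
  induction M generalizing u s with
  | zero => simpa [taylorSum] using hB s hs
  | succ M ih =>
    set r : ℝ → E := fun s => u 0 s - taylorSum (M + 1) (fun j => (j.factorial : ℝ)⁻¹ • u j 0) s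
    have hB0 : 0 ≤ B := (norm_nonneg _).trans (hB s hs)
    have hr : ∀ x ∈ Icc (0 : ℝ) 1, HasDerivWithinAt r
        (u 1 x - taylorSum M (fun j => (j.factorial : ℝ)⁻¹ • u (j + 1) 0) x) (Icc 0 1) x := by
      intro x hx
      have hcoeff : ∀ j, ((j + 1 : ℕ) : ℝ) • ((j + 1).factorial : ℝ)⁻¹ • u (j + 1) 0 =
          (j.factorial : ℝ)⁻¹ • u (j + 1) 0 := fun j => by
        rw [smul_smul, Nat.factorial_succ, Nat.cast_mul, mul_inv,
          mul_inv_cancel_left₀ (by positivity)]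
      simpa only [hcoeff] using
        (hu 0 x hx).fun_sub (hasDerivAt_taylorSum_succ M
          (fun j => (j.factorial : ℝ)⁻¹ • u j 0) x).hasDerivWithinAt
    have hmvt := norm_image_sub_le_of_norm_deriv_le_segment' hr
      (fun x hx => ih (u := fun j => u (j + 1)) (fun j => hu (j + 1)) hB (Ico_subset_Icc_self hx))
      s hs
    have hr0 : r 0 = 0 := by simp [r, taylorSum_succ]
    rw [hr0, sub_zero, sub_zero] at hmvt
    exact hmvt.trans (mul_le_of_le_one_right hB0 hs.2)

/-- `h s = ∑_{k < M} s^k c_k + O(s^M)` as `s → 0+`. -/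
def HasExpansion (M : ℕ) (h : ℝ → E) (c : ℕ → E) : Prop :=
  (fun s => h s - taylorSum M c s) =O[𝓝[>] 0] fun s : ℝ => s ^ M

namespace HasExpansion

variable {M : ℕ} {h h' : ℝ → E} {c d : ℕ → E}

lemma congr_of_isBigO (hh : HasExpansion M h c)
    (hsub : (fun s => h' s - h s) =O[𝓝[>] 0] fun s : ℝ => s ^ M) : HasExpansion M h' c := by
  simpa [HasExpansion] using hsub.add hh

lemma congr_coeff (hh : HasExpansion M h c) (hcd : ∀ k < M, c k = d k) : HasExpansion M h d := by
  have : taylorSum M d = taylorSum M c := funext fun s =>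
    Finset.sum_congr rfl fun k hk => by rw [hcd k (Finset.mem_range.1 hk)]
  rwa [HasExpansion, this]

protected lemma const (M : ℕ) (v : E) :
    HasExpansion M (fun _ => v) fun k => if k = 0 then v else 0 := by
  cases M with
  | zero => simpa [HasExpansion, taylorSum] using
      Asymptotics.isBigO_const_const v (one_ne_zero' ℝ) (𝓝[>] (0 : ℝ))
  | succ M => simpa [HasExpansion, taylorSum_succ, taylorSum] using
      Asymptotics.isBigO_zero (fun s : ℝ => s ^ (M + 1)) (𝓝[>] 0)

protected lemma sum {ι : Type*} {I : Finset ι} {h : ι → ℝ → E} {c : ι → ℕ → E}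
    (hh : ∀ i ∈ I, HasExpansion M (h i) (c i)) :
    HasExpansion M (fun s => ∑ i ∈ I, h i s) (fun k => ∑ i ∈ I, c i k) := by
  refine (Asymptotics.IsBigO.sum hh).congr_left fun s => ?_
  simp only [taylorSum, Finset.smul_sum, Finset.sum_apply, Finset.sum_sub_distrib]
  rw [Finset.sum_comm]

protected lemma const_smul (hh : HasExpansion M h c) (a : ℝ) :
    HasExpansion M (fun s => a • h s) (fun k => a • c k) := by
  refine (Asymptotics.IsBigO.const_smul_left hh a).congr_left fun s => ?_
  simp only [taylorSum, Pi.smul_apply, smul_sub, Finset.smul_sum, smul_comm a]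

lemma sum_pow_smul {h : ℕ → ℝ → E} {c : ℕ → ℕ → E}
    (hh : ∀ k ∈ Finset.range M, HasExpansion M (h k) (c k)) :
    HasExpansion M (fun s => ∑ k ∈ Finset.range M, s ^ k • h k s)
      (fun n => ∑ x ∈ antidiagonal n, c x.2 x.1) := by
  have hbdd : ∀ k, (fun s : ℝ => s ^ k) =O[𝓝[>] 0] fun _ => (1 : ℝ) := fun k =>
    ((continuous_pow k).tendsto 0).isBigO_one ℝ |>.mono nhdsWithin_le_nhds
  have hhigh : (fun s : ℝ => ∑ x ∈ Finset.range M ×ˢ Finset.range M with ¬ x.1 + x.2 < M,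
      s ^ (x.1 + x.2) • c x.2 x.1) =O[𝓝[>] 0] fun s : ℝ => s ^ M := by
    refine .fun_sum fun x hx => ?_
    obtain ⟨k, hk⟩ := Nat.exists_eq_add_of_le (not_lt.1 (Finset.mem_filter.1 hx).2)
    simpa [hk, pow_add] using
      ((Asymptotics.isBigO_refl (fun s : ℝ => s ^ M) _).mul (hbdd k)).smul
        (Asymptotics.isBigO_const_const (c x.2 x.1) (one_ne_zero' ℝ) _)
  have hrem : (fun s : ℝ => ∑ k ∈ Finset.range M, s ^ k • (h k s - taylorSum M (c k) s))
      =O[𝓝[>] 0] fun s : ℝ => s ^ M :=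
    .fun_sum fun k hk => by simpa using (hbdd k).smul (hh k hk)
  refine (hrem.add hhigh).congr_left fun s => ?_
  have hsplit : ∑ k ∈ Finset.range M, s ^ k • taylorSum M (c k) s =
      taylorSum M (fun n => ∑ x ∈ antidiagonal n, c x.2 x.1) s +
        ∑ x ∈ Finset.range M ×ˢ Finset.range M with ¬ x.1 + x.2 < M,
          s ^ (x.1 + x.2) • c x.2 x.1 := by
    have hlow : taylorSum M (fun n => ∑ x ∈ antidiagonal n, c x.2 x.1) s =
        ∑ n ∈ Finset.range M, ∑ x ∈ antidiagonal n, s ^ (x.1 + x.2) • c x.2 x.1 := by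
      simp only [taylorSum, Finset.smul_sum]
      refine Finset.sum_congr rfl fun n _ => Finset.sum_congr rfl fun x hx => ?_
      rw [Finset.HasAntidiagonal.mem_antidiagonal.1 hx]
    rw [hlow, ← sum_filter_add_lt_eq_sum_antidiagonal M fun x => s ^ (x.1 + x.2) • c x.2 x.1,
      Finset.sum_filter_add_sum_filter_not, Finset.sum_product_right]
    simp only [taylorSum, Finset.smul_sum, smul_smul, ← pow_add, add_comm]
  simp only [smul_sub, Finset.sum_sub_distrib, hsplit]
  abel

lemma tendsto (hh : HasExpansion (M + 1) h c) : Tendsto h (𝓝[>] 0) (𝓝 (c 0)) := by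
  simpa using (hh.trans_tendsto (tendsto_pow_succ_nhdsGT_zero M)).add (tendsto_taylorSum_succ M c)

lemma unique (hc : HasExpansion M h c) (hd : HasExpansion M h d) {k : ℕ} (hk : k < M) :
    c k = d k := by
  refine sub_eq_zero.1 (eq_zero_of_isBigO_taylorSum_pow (M := M) (c := fun k => c k - d k) ?_ hk)
  refine (Asymptotics.IsBigO.sub hd hc).congr_left fun s => ?_
  simp only [taylorSum, smul_sub, Finset.sum_sub_distrib]
  abel

end HasExpansion

lemma isBigO_pow_succ_of_hasDerivAt {r r' : ℝ → E} {m : ℕ} (hr0 : Tendsto r (𝓝[>] 0) (𝓝 0))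
    (hr : ∀ᶠ s in 𝓝[>] 0, HasDerivAt r (r' s) s)
    (hr' : r' =O[𝓝[>] 0] fun s : ℝ => s ^ m) : r =O[𝓝[>] 0] fun s : ℝ => s ^ (m + 1) := by
  obtain ⟨C, hC0, hC⟩ := hr'.exists_pos
  obtain ⟨δ, hδ, hδr⟩ := mem_nhdsGT_iff_exists_Ioo_subset.1 (hr.and hC.bound)
  refine .of_bound C ?_
  filter_upwards [Ioo_mem_nhdsGT hδ] with s hs
  have hnear : ∀ᶠ s₀ in 𝓝[>] (0 : ℝ), ‖r s - r s₀‖ ≤ C * s ^ m * (s - s₀) := by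
    filter_upwards [Ioo_mem_nhdsGT hs.1] with s₀ hs₀
    have hIoo : ∀ τ ∈ Icc s₀ s, τ ∈ Ioo 0 δ := fun τ hτ =>
      ⟨hs₀.1.trans_le hτ.1, hτ.2.trans_lt hs.2⟩
    refine norm_image_sub_le_of_norm_deriv_le_segment'
      (fun τ hτ => (hδr (hIoo τ hτ)).1.hasDerivWithinAt) (fun τ hτ => ?_) s ⟨hs₀.2.le, le_rfl⟩
    have hτ' := hIoo τ (Ico_subset_Icc_self hτ)
    refine (hδr hτ').2.trans ?_
    rw [norm_pow, Real.norm_of_nonneg hτ'.1.le]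
    gcongr
    exacts [hτ'.1.le, hτ.2.le]
  have hlim : Tendsto (fun s₀ => ‖r s - r s₀‖) (𝓝[>] 0) (𝓝 ‖r s‖) := by
    simpa using (tendsto_const_nhds.sub hr0).norm
  have hlim' : Tendsto (fun s₀ => C * s ^ m * (s - s₀)) (𝓝[>] 0) (𝓝 (C * s ^ m * (s - 0))) :=
    tendsto_nhdsWithin_of_tendsto_nhds (Continuous.tendsto (by fun_prop) 0)
  have := le_of_tendsto_of_tendsto hlim hlim' hnear
  rwa [sub_zero, mul_assoc, ← pow_succ, ← Real.norm_of_nonneg (pow_nonneg hs.1.le (m + 1))] at this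

/-- Asymptotic expansions cannot be differentiated term by term, so the expansion of `h'` is
integrated and the result compared with that of `h`. -/
lemma HasExpansion.natCast_smul_coeff_eq {h h' : ℝ → E} {c d : ℕ → E}
    (hh : ∀ M, HasExpansion M h c) (hderiv : ∀ᶠ s in 𝓝[>] 0, HasDerivAt h (h' s) s)
    (hh' : ∀ M, HasExpansion M (fun s => s • h' s) d) (hd : d 0 = 0) (k : ℕ) :
    (k : ℝ) • c k = d k := by
  set b : ℕ → E := fun k => if k = 0 then c 0 else (k : ℝ)⁻¹ • d k
  have hb : ∀ k, ((k + 1 : ℕ) : ℝ) • b (k + 1) = d (k + 1) := fun k => by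
    simp only [b, if_neg k.succ_ne_zero]
    exact smul_inv_smul₀ (by positivity) _
  rcases eq_or_ne k 0 with rfl | hk
  · rw [hd, Nat.cast_zero, zero_smul]
  suffices HasExpansion (k + 1) h b by
    rw [(hh (k + 1)).unique this k.lt_succ_self]
    obtain ⟨k, rfl⟩ := Nat.exists_eq_succ_of_ne_zero hk
    exact hb k
  refine isBigO_pow_succ_of_hasDerivAt
    (r' := fun s => h' s - taylorSum k (fun k => d (k + 1)) s) ?_ ?_ ?_
  · simpa [b] using (hh 1).tendsto.sub (tendsto_taylorSum_succ k b)
  · filter_upwards [hderiv] with s hs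
    simpa only [hb] using hs.fun_sub (hasDerivAt_taylorSum_succ k b s)
  · have hdiv := (Asymptotics.isBigO_refl (fun s : ℝ => s⁻¹) (𝓝[>] 0)).smul (hh' (k + 1))
    refine hdiv.congr' ?_ ?_ <;> filter_upwards [self_mem_nhdsWithin] with s (hs : 0 < s)
    · rw [taylorSum_succ, hd, add_zero, ← smul_sub, inv_smul_smul₀ hs.ne']
    · rw [smul_eq_mul, pow_succ', inv_mul_cancel_left₀ hs.ne']

end OneSidedExpansions

section VectorFieldsAsOperators

open TopologicalSpace (Opens)

variable {E : Type*} [NormedAddCommGroup E] [NormedSpace ℝ E] {U : Opens E}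

/-- The smooth functions on the open set `U`, encoded as functions on the whole space by the junk
value `0` outside of `U`. -/
def smoothFun (U : Opens E) : Submodule ℝ (E → ℝ) where
  carrier := {f | ContDiffOn ℝ (⊤ : ℕ∞) f U ∧ ∀ x ∉ U, f x = 0}
  add_mem' hf hg := ⟨hf.1.add hg.1, fun x hx => by simp [hf.2 x hx, hg.2 x hx]⟩
  zero_mem' := ⟨contDiffOn_const, fun _ _ => rfl⟩
  smul_mem' c f hf := ⟨hf.1.const_smul c, fun x hx => by simp [hf.2 x hx]⟩

/-- The maps that are smooth vector fields on the open set `U`. No condition is imposed outside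
of `U`, so such a map is determined by its action on `smoothFun U` on `U` only. -/
def smoothField (U : Opens E) : Submodule ℝ (E → E) where
  carrier := {X | ContDiffOn ℝ (⊤ : ℕ∞) X U}
  add_mem' hX hY := hX.add hY
  zero_mem' := contDiffOn_const
  smul_mem' c _ hX := hX.const_smul c

instance : CoeFun (smoothFun U) fun _ => E → ℝ := ⟨Subtype.val⟩

instance : CoeFun (smoothField U) fun _ => E → E := ⟨Subtype.val⟩

lemma indicator_mem_smoothFun {f : E → ℝ} (hf : ContDiffOn ℝ (⊤ : ℕ∞) f U) :
    (U : Set E).indicator f ∈ smoothFun U :=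
  ⟨hf.congr fun _ hx => indicator_of_mem hx f, fun _ hx => indicator_of_notMem hx f⟩

lemma smoothFun_ext {f g : smoothFun U} (h : ∀ x ∈ U, f x = g x) : f = g := by
  ext x
  by_cases hx : x ∈ U
  · exact h x hx
  · rw [f.2.2 x hx, g.2.2 x hx]

lemma contDiffAt_smoothFun (f : smoothFun U) {x : E} (hx : x ∈ U) :
    ContDiffAt ℝ (⊤ : ℕ∞) f x :=
  f.2.1.contDiffAt (U.isOpen.mem_nhds hx)

lemma differentiableAt_smoothFun (f : smoothFun U) {x : E} (hx : x ∈ U) :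
    DifferentiableAt ℝ f x :=
  (contDiffAt_smoothFun f hx).differentiableAt (by simp)

lemma contDiffAt_smoothField (X : smoothField U) {x : E} (hx : x ∈ U) :
    ContDiffAt ℝ (⊤ : ℕ∞) X x :=
  ContDiffOn.contDiffAt X.2 (U.isOpen.mem_nhds hx)

lemma differentiableAt_smoothField (X : smoothField U) {x : E} (hx : x ∈ U) :
    DifferentiableAt ℝ X x :=
  (contDiffAt_smoothField X hx).differentiableAt (by simp)

/-- The derivation `f ↦ X f` of `smoothFun U` along a vector field. -/
def lieDer (U : Opens E) : smoothField U →ₗ[ℝ] Module.End ℝ (smoothFun U) :=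
  LinearMap.mk₂ ℝ
    (fun X f => ⟨(U : Set E).indicator fun x => fderiv ℝ f x (X x), indicator_mem_smoothFun
      ((f.2.1.fderiv_of_isOpen U.isOpen (by simp)).clm_apply X.2)⟩)
    (fun X Y f => smoothFun_ext fun x hx => by simp [hx])
    (fun c X f => smoothFun_ext fun x hx => by simp [hx])
    (fun X f g => smoothFun_ext fun x hx => by
      simp [hx, fderiv_add (differentiableAt_smoothFun f hx) (differentiableAt_smoothFun g hx)])
    (fun c X f => smoothFun_ext fun x hx => by
      simp [hx, fderiv_const_smul (differentiableAt_smoothFun f hx)])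

lemma lieDer_apply (X : smoothField U) (f : smoothFun U) {x : E} (hx : x ∈ U) :
    lieDer U X f x = fderiv ℝ f x (X x) :=
  indicator_of_mem (s := (U : Set E)) hx fun z => fderiv ℝ f z (X z)

lemma lieBracket_mem_smoothField (X Y : smoothField U) :
    VectorField.lieBracket ℝ X Y ∈ smoothField U := fun _ hx =>
  ((contDiffAt_smoothField X hx).lieBracket_vectorField (contDiffAt_smoothField Y hx)
    (by simp)).contDiffWithinAt

lemma lieDer_lieBracket (X Y : smoothField U) :
    lieDer U ⟨VectorField.lieBracket ℝ X Y, lieBracket_mem_smoothField X Y⟩ =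
      ⁅lieDer U X, lieDer U Y⁆ := by
  refine LinearMap.ext fun f => smoothFun_ext fun x hx => ?_
  have hlocal : ∀ Z : smoothField U, lieDer U Z f =ᶠ[𝓝 x] fun z => fderiv ℝ f z (Z z) := fun Z =>
    eventually_of_mem (U.isOpen.mem_nhds hx) fun z hz => lieDer_apply Z f hz
  change _ = lieDer U X (lieDer U Y f) x - lieDer U Y (lieDer U X f) x
  rw [lieDer_apply _ _ hx, lieDer_apply _ _ hx, lieDer_apply _ _ hx, (hlocal X).fderiv_eq,
    (hlocal Y).fderiv_eq]
  exact VectorField.fderiv_apply_lieBracket (contDiffAt_smoothFun f hx)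
    (by rw [minSmoothness_of_isRCLikeNormedField]; exact WithTop.coe_le_coe.2 le_top)
    (differentiableAt_smoothField Y hx) (differentiableAt_smoothField X hx)

lemma eqOn_of_lieDer_eq {X Y : smoothField U} (h : lieDer U X = lieDer U Y) :
    EqOn X Y U := by
  intro x hx
  refine (SeparatingDual.eq_iff_forall_dual_eq (R := ℝ)).2 fun φ => ?_
  set f : smoothFun U := ⟨(U : Set E).indicator φ, indicator_mem_smoothFun φ.contDiff.contDiffOn⟩
  have hlocal : f =ᶠ[𝓝 x] φ :=
    eventually_of_mem (U.isOpen.mem_nhds hx) fun z hz => indicator_of_mem hz φ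
  have hf : fderiv ℝ f x = φ := hlocal.fderiv_eq.trans φ.fderiv
  rw [← hf, ← lieDer_apply X f hx, ← lieDer_apply Y f hx, h]

end VectorFieldsAsOperators

section ExponentialCurves

open TopologicalSpace (Opens)

variable {E : Type*} [NormedAddCommGroup E] [NormedSpace ℝ E] {U : Opens E}

lemma taylorSum_pow_succ_apply (T : ℕ → Module.End ℝ (smoothFun U)) (M m : ℕ) (f : smoothFun U)
    (s : ℝ) (x : E) :
    (taylorSum M T s ^ (m + 1)) f x =
      ∑ k ∈ Finset.range M, s ^ k • (taylorSum M T s ^ m) (T k f) x := by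
  have hf : taylorSum M T s f = ∑ k ∈ Finset.range M, s ^ k • T k f := by simp [taylorSum]
  simp [pow_succ, hf]

lemma isBigO_taylorSum_pow_apply {T : ℕ → Module.End ℝ (smoothFun U)} (h0 : T 0 = 0) (M m : ℕ)
    (f : smoothFun U) {x : E} (hx : x ∈ U) :
    (fun p : ℝ × E => (taylorSum M T p.1 ^ m) f p.2) =O[𝓝[>] 0 ×ˢ 𝓝 x] fun p => p.1 ^ m := by
  induction m generalizing f with
  | zero =>
    simp only [pow_zero]
    exact ((contDiffAt_smoothFun f hx).continuousAt.tendsto.comp tendsto_snd).isBigO_one ℝ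
  | succ m ih =>
    have hs : (Prod.fst : ℝ × E → ℝ) =O[𝓝[>] 0 ×ˢ 𝓝 x] fun _ => (1 : ℝ) :=
      (tendsto_fst.mono_right nhdsWithin_le_nhds).isBigO_one ℝ
    simp only [taylorSum_pow_succ_apply]
    exact isBigO_taylorSum_pow_succ hs (by ext; simp [h0]) (fun k => ih (T k f)) M

lemma hasExpansion_taylorSum_pow_apply (p : PowerSeries (Module.End ℝ (smoothFun U))) (M m : ℕ)
    (f : smoothFun U) (x : E) :
    HasExpansion M (fun s => (taylorSum M (fun k => PowerSeries.coeff k p) s ^ m) f x)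
      (fun n => PowerSeries.coeff n (p ^ m) f x) := by
  induction m generalizing f with
  | zero =>
    refine (HasExpansion.const M (f x)).congr_coeff fun k _ => ?_
    rw [pow_zero, PowerSeries.coeff_one]
    split_ifs <;> rfl
  | succ m ih =>
    simp only [taylorSum_pow_succ_apply]
    refine (HasExpansion.sum_pow_smul fun k _ => ih (PowerSeries.coeff k p f)).congr_coeff
      fun n _ => ?_
    simp [pow_succ, PowerSeries.coeff_mul]

variable {a : ℕ → smoothField U} {x : E}

lemma eventually_forall_integralCurve (h0 : a 0 = 0) (hx : x ∈ U) (M : ℕ) {P : ℝ × E → Prop}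
    (hP : ∀ᶠ p in 𝓝[>] (0 : ℝ) ×ˢ 𝓝 x, P p) :
    ∀ᶠ s in 𝓝[>] 0, ∀ φ : ℝ → E, φ 0 = x →
      IsIntegralCurveOn φ (fun _ => (taylorSum M a s).1) (Icc 0 1) →
      ∀ τ ∈ Icc (0 : ℝ) 1, P (s, φ τ) := by
  have hfield : (fun p : ℝ × E => taylorSum M a p.1 p.2) =O[𝓝[>] 0 ×ˢ 𝓝 x]
      fun p => p.1 ^ (0 + 1) := by
    have hs : (Prod.fst : ℝ × E → ℝ) =O[𝓝[>] 0 ×ˢ 𝓝 x] fun _ => (1 : ℝ) :=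
      (tendsto_fst.mono_right nhdsWithin_le_nhds).isBigO_one ℝ
    refine (isBigO_taylorSum_pow_succ (c := fun k p => a k p.2) hs (by ext; simp [h0])
      (fun k => ?_) M).congr_left fun p => by simp [taylorSum]
    simp only [pow_zero]
    exact ((contDiffAt_smoothField (a k) hx).continuousAt.tendsto.comp tendsto_snd).isBigO_one ℝ
  obtain ⟨C, hC⟩ := hfield.bound
  obtain ⟨p, hp, q, hq, hpq⟩ := eventually_prod_iff.1 (hP.and hC)
  obtain ⟨δ, hδ, hball⟩ := nhds_basis_closedBall.eventually_iff.1 hq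
  have hsmall : ∀ᶠ s in 𝓝[>] (0 : ℝ), C * ‖s ^ (0 + 1)‖ < δ := by
    have : ContinuousAt (fun s : ℝ => C * ‖s ^ (0 + 1)‖) 0 := by fun_prop
    exact nhdsWithin_le_nhds (this.eventually_lt_const (by simpa using hδ))
  filter_upwards [hp, hsmall] with s hs hsδ φ hφ0 hφ
  have hmem : ∀ {τ : ℝ}, τ ≤ 1 → ‖φ τ - x‖ ≤ δ * τ → φ τ ∈ closedBall x δ := fun hτ hle =>
    mem_closedBall_iff_norm.2 (hle.trans (mul_le_of_le_one_right hδ.le hτ))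
  have htrap : ∀ ⦃τ⦄, τ ∈ Icc (0 : ℝ) 1 → ‖φ τ - x‖ ≤ δ * τ := by
    refine image_norm_le_of_norm_deriv_right_lt_deriv_boundary
      (fun τ hτ => ((hφ τ hτ).sub_const x).continuousWithinAt)
      (fun τ hτ => ((hφ τ (Ico_subset_Icc_self hτ)).sub_const x).mono_of_mem_nhdsWithin
        (Icc_mem_nhdsGE_of_mem hτ))
      (by simp [hφ0]) (fun τ => (hasDerivAt_id τ).const_mul δ) fun τ hτ heq => ?_
    rw [mul_one]
    exact (hpq hs (hball (hmem hτ.2.le heq.le))).2.trans_lt hsδ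
  exact fun τ hτ => (hpq hs (hball (hmem hτ.2 (htrap hτ)))).1

lemma tendsto_integralCurve (h0 : a 0 = 0) (hx : x ∈ U) (M : ℕ) {φ : ℝ → ℝ → E}
    (hφ : ∀ᶠ s in 𝓝[>] 0, φ s 0 = x ∧
      IsIntegralCurveOn (φ s) (fun _ => (taylorSum M a s).1) (Icc 0 1)) :
    Tendsto (fun s => φ s 1) (𝓝[>] 0) (𝓝 x) := by
  refine tendsto_def.2 fun V hV => ?_
  filter_upwards [hφ, eventually_forall_integralCurve h0 hx M (tendsto_snd.eventually hV)]
    with s hs hsV using hsV _ hs.1 hs.2 1 (by simp)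

lemma hasDerivWithinAt_comp_integralCurve {V : smoothField U} (f : smoothFun U) {φ : ℝ → E}
    {I : Set ℝ} (hφ : IsIntegralCurveOn φ (fun _ => V.1) I) {τ : ℝ} (hτ : τ ∈ I)
    (hU : φ τ ∈ U) : HasDerivWithinAt (fun τ => f (φ τ)) (lieDer U V f (φ τ)) I τ := by
  rw [lieDer_apply V f hU]
  exact (differentiableAt_smoothFun f hU).hasFDerivAt.comp_hasDerivWithinAt τ (hφ τ hτ)

lemma exists_norm_apply_integralCurve_sub_le (h0 : a 0 = 0) (hx : x ∈ U) (M : ℕ)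
    (f : smoothFun U) :
    ∃ C : ℝ, ∀ᶠ s in 𝓝[>] 0, ∀ φ : ℝ → E, φ 0 = x →
      IsIntegralCurveOn φ (fun _ => (taylorSum M a s).1) (Icc 0 1) →
      ‖f (φ 1) - ∑ j ∈ Finset.range M,
        (j.factorial : ℝ)⁻¹ • (taylorSum M (fun k => lieDer U (a k)) s ^ j) f x‖ ≤ C * ‖s ^ M‖ := by
  have hT0 : lieDer U (a 0) = 0 := by rw [h0, map_zero]
  obtain ⟨C, hC⟩ :=
    (isBigO_taylorSum_pow_apply (T := fun k => lieDer U (a k)) hT0 M M f hx).bound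
  have hU : ∀ᶠ p in 𝓝[>] (0 : ℝ) ×ˢ 𝓝 x, p.2 ∈ U :=
    tendsto_snd.eventually (U.isOpen.mem_nhds hx)
  refine ⟨C, ?_⟩
  filter_upwards [eventually_forall_integralCurve h0 hx M (hU.and hC)] with s hs φ hφ0 hφ
  have hstay := hs φ hφ0 hφ
  have htaylor := norm_sub_taylorSum_le (M := M) (s := 1)
    (u := fun j τ => (taylorSum M (fun k => lieDer U (a k)) s ^ j) f (φ τ))
    (fun j τ hτ => by
      rw [pow_succ', ← map_taylorSum]
      exact hasDerivWithinAt_comp_integralCurve _ hφ hτ (hstay τ hτ).1)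
    (fun τ hτ => (hstay τ hτ).2) (by simp)
  simpa [taylorSum, hφ0] using htaylor

/-- The curve `y` satisfies `y(s) = e^{∑_{k < M} s^k a_k} x + O(s^M)` as `s → 0+` for every `M`.
The time-one flow of a truncation is witnessed by an integral curve `φ s` starting at `x`. -/
def IsExpCurve (a : ℕ → smoothField U) (x : E) (y : ℝ → E) : Prop :=
  ∀ M, ∃ φ : ℝ → ℝ → E,
    (∀ᶠ s in 𝓝[>] 0, φ s 0 = x ∧
      IsIntegralCurveOn (φ s) (fun _ => (taylorSum M a s).1) (Icc 0 1)) ∧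
    (fun s => y s - φ s 1) =O[𝓝[>] 0] fun s : ℝ => s ^ M

namespace IsExpCurve

variable {y : ℝ → E}

protected lemma tendsto (hy : IsExpCurve a x y) (h0 : a 0 = 0) (hx : x ∈ U) :
    Tendsto y (𝓝[>] 0) (𝓝 x) := by
  obtain ⟨φ, hφ, hyφ⟩ := hy 1
  have hflow : Tendsto (fun s => φ s 1) (𝓝[>] 0) (𝓝 x) := tendsto_integralCurve h0 hx 1 hφ
  simpa using (hyφ.trans_tendsto (tendsto_pow_succ_nhdsGT_zero 0)).add hflow

theorem hasExpansion_comp (hy : IsExpCurve a x y) (h0 : a 0 = 0) (hx : x ∈ U) (f : smoothFun U)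
    (M : ℕ) :
    HasExpansion M (fun s => f (y s)) (fun n => PowerSeries.coeff n
      (formalExp ℝ (PowerSeries.mk fun k => lieDer U (a k))) f x) := by
  obtain ⟨φ, hφ, hyφ⟩ := hy M
  have hflow : (fun s => f (φ s 1) - ∑ j ∈ Finset.range M, (j.factorial : ℝ)⁻¹ •
      (taylorSum M (fun k => lieDer U (a k)) s ^ j) f x) =O[𝓝[>] 0] fun s : ℝ => s ^ M := by
    obtain ⟨C, hC⟩ := exists_norm_apply_integralCurve_sub_le h0 hx M f
    refine .of_bound C ?_
    filter_upwards [hφ, hC] with s hs hCs using hCs _ hs.1 hs.2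
  have hlip : (fun s => f (y s) - f (φ s 1)) =O[𝓝[>] 0] fun s : ℝ => s ^ M := by
    obtain ⟨K, V, hV, hK⟩ :=
      ((contDiffAt_smoothFun f hx).of_le (by simp)).exists_lipschitzOnWith
    refine .trans (.of_bound K ?_) hyφ
    filter_upwards [hy.tendsto h0 hx hV, tendsto_integralCurve h0 hx M hφ hV] with s hys hφs
      using hK.norm_sub_le hys hφs
  have hsum := HasExpansion.sum (I := Finset.range M) fun j _ =>
    (hasExpansion_taylorSum_pow_apply (PowerSeries.mk fun k => lieDer U (a k)) M j f x).const_smul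
      (j.factorial : ℝ)⁻¹
  simp only [PowerSeries.coeff_mk] at hsum
  refine ((hsum.congr_of_isBigO hflow).congr_of_isBigO hlip).congr_coeff fun n hn => ?_
  have hcoeff := coeff_formalExp_of_lt (𝕜 := ℝ)
    (a := PowerSeries.mk fun k => lieDer U (a k)) (by simp [h0]) hn
  simp [hcoeff]

lemma hasExpansion_of_isBigO_sub_taylorSum (hy : IsExpCurve a x y) (h0 : a 0 = 0) (hx : x ∈ U)
    {b : ℕ → smoothField U} {w : ℝ → E} {M : ℕ}
    (hw : (fun s => w s - taylorSum M b s (y s)) =O[𝓝[>] 0] fun s : ℝ => s ^ M)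
    (f : smoothFun U) :
    HasExpansion M (fun s => fderiv ℝ f (y s) (w s)) (fun n => PowerSeries.coeff n
      (formalExp ℝ (PowerSeries.mk fun k => lieDer U (a k)) *
        PowerSeries.mk fun k => lieDer U (b k)) f x) := by
  have hsum := HasExpansion.sum_pow_smul (M := M) fun k _ =>
    hy.hasExpansion_comp h0 hx (lieDer U (b k) f) M
  have hbdd : (fun s => fderiv ℝ f (y s)) =O[𝓝[>] 0] fun _ => (1 : ℝ) := by
    have hcont : ContinuousAt (fderiv ℝ f) x :=
      ((contDiffAt_smoothFun f hx).fderiv_right (m := 0) (by simp)).continuousAt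
    exact (hcont.tendsto.comp (hy.tendsto h0 hx)).isBigO_one ℝ
  have hrem : (fun s => fderiv ℝ f (y s) (w s - taylorSum M b s (y s)))
      =O[𝓝[>] 0] fun s : ℝ => s ^ M := by
    refine (Asymptotics.IsBigO.of_norm_le fun s => ?_).trans
      (by simpa using hbdd.norm_left.mul hw.norm_left)
    exact ContinuousLinearMap.le_opNorm _ _
  refine (hsum.congr_of_isBigO (hrem.congr' ?_ .rfl)).congr_coeff fun n _ => ?_
  · filter_upwards [hy.tendsto h0 hx (U.isOpen.mem_nhds hx)] with s hs
    simp [taylorSum, lieDer_apply _ f hs]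
  · simp [PowerSeries.coeff_mul]

theorem coeff_euler_formalExp_apply (hy : IsExpCurve a x y) (h0 : a 0 = 0) (hx : x ∈ U)
    {b : ℕ → smoothField U} (hb0 : b 0 = 0) {y' : ℝ → E}
    (hderiv : ∀ᶠ s in 𝓝[>] 0, HasDerivAt y (y' s) s)
    (hy' : ∀ M, (fun s => s • y' s - taylorSum M b s (y s)) =O[𝓝[>] 0] fun s : ℝ => s ^ M)
    (f : smoothFun U) (k : ℕ) :
    PowerSeries.coeff k (euler (formalExp ℝ (PowerSeries.mk fun k => lieDer U (a k)))) f x =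
      PowerSeries.coeff k (formalExp ℝ (PowerSeries.mk fun k => lieDer U (a k)) *
        PowerSeries.mk fun k => lieDer U (b k)) f x := by
  have hchain : ∀ᶠ s in 𝓝[>] 0,
      HasDerivAt (fun s => f (y s)) (fderiv ℝ f (y s) (y' s)) s := by
    filter_upwards [hderiv, hy.tendsto h0 hx (U.isOpen.mem_nhds hx)] with s hs hU
    exact (differentiableAt_smoothFun f hU).hasFDerivAt.comp_hasDerivAt s hs
  have hexp := HasExpansion.natCast_smul_coeff_eq (hy.hasExpansion_comp h0 hx f) hchain
    (fun M => by simpa using hy.hasExpansion_of_isBigO_sub_taylorSum h0 hx (hy' M) f)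
    (by simp [PowerSeries.coeff_mul, hb0]) k
  simp [coeff_euler_powerSeries (formalExp ℝ (PowerSeries.mk fun k => lieDer U (a k))), ← hexp]

end IsExpCurve

theorem euler_formalExp_eq_of_forall_isExpCurve (h0 : a 0 = 0) {b : ℕ → smoothField U}
    (hb0 : b 0 = 0)
    (h : ∀ x ∈ U, ∃ y y' : ℝ → E, IsExpCurve a x y ∧ (∀ᶠ s in 𝓝[>] 0, HasDerivAt y (y' s) s) ∧
      ∀ M, (fun s => s • y' s - taylorSum M b s (y s)) =O[𝓝[>] 0] fun s : ℝ => s ^ M) :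
    euler (formalExp ℝ (PowerSeries.mk fun k => lieDer U (a k))) =
      formalExp ℝ (PowerSeries.mk fun k => lieDer U (a k)) *
        PowerSeries.mk fun k => lieDer U (b k) := by
  refine PowerSeries.ext fun k => LinearMap.ext fun f => smoothFun_ext fun x hx => ?_
  obtain ⟨y, y', hy, hderiv, hy'⟩ := h x hx
  exact hy.coeff_euler_formalExp_apply h0 hx hb0 hderiv hy' f k

end ExponentialCurves

section ReductionToRays

open TopologicalSpace (Opens)

lemma mem_multiIdxLt {N M : ℕ} {α : Fin N → ℕ} : α ∈ multiIdxLt N M ↔ ∑ i, α i < M := by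
  simp only [multiIdxLt, trunc, Finset.mem_filter, Finset.mem_image, Finset.mem_univ, true_and,
    and_iff_right_iff_imp]
  intro hα
  have hle : ∀ i, α i < M + 1 := fun i =>
    ((Finset.single_le_sum (fun _ _ => Nat.zero_le _) (Finset.mem_univ i)).trans_lt hα).trans
      M.lt_succ_self
  exact ⟨fun i => ⟨α i, hle i⟩, rfl⟩

lemma sum_multiIdxLt_monomial_smul {V : Type*} [AddCommGroup V] [Module ℝ V] {N : ℕ}
    (c : (Fin N → ℕ) → V) (M : ℕ) (t : Fin N → ℝ) (s : ℝ) :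
    ∑ α ∈ multiIdxLt N M, Zhang.monomial α (s • WithLp.toLp 2 t) • c α =
      taylorSum M (fun k => homEval t k fun α => c α) s := by
  have hmaps : ∀ α ∈ multiIdxLt N M, ∑ i, α i ∈ Finset.range M := fun α hα =>
    Finset.mem_range.2 (mem_multiIdxLt.1 hα)
  rw [← Finset.sum_fiberwise_of_maps_to hmaps, taylorSum]
  refine Finset.sum_congr rfl fun k hk => ?_
  rw [homEval, Finset.smul_sum]
  refine Finset.sum_nbij' Finsupp.equivFunOnFinite.symm (⇑) ?_ ?_ ?_ ?_ ?_
  · simp +contextual [mem_multiIdxLt]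
  · intro α hα
    have hsum : ∑ i, α i = k := by
      rw [← Finsupp.degree_eq_sum, mem_finsuppAntidiag_univ.1 hα]
    simp [mem_multiIdxLt, hsum, Finset.mem_range.1 hk]
  · exact fun _ _ => rfl
  · exact fun _ _ => Finsupp.ext fun _ => rfl
  · intro α hα
    simp [Zhang.monomial, mul_pow, Finset.prod_mul_distrib, Finset.prod_pow_eq_pow_sum, smul_smul,
      (Finset.mem_filter.1 hα).2]

lemma isBigO_pow_of_eventually_norm_le {E F : Type*} [NormedAddCommGroup E] [NormedAddCommGroup F]
    [NormedSpace ℝ F] {f : ℝ → E} {v : F} {C : ℝ} {M : ℕ}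
    (hf : ∀ᶠ s in 𝓝[>] (0 : ℝ), ‖f s‖ ≤ C * ‖s • v‖ ^ M) :
    f =O[𝓝[>] 0] fun s : ℝ => s ^ M := by
  refine .of_bound (C * ‖v‖ ^ M) (hf.mono fun s hs => hs.trans_eq ?_)
  rw [norm_smul, mul_pow, norm_pow]
  ring

lemma eventually_smul_mem_ball {F : Type*} [NormedAddCommGroup F] [NormedSpace ℝ F] (v : F)
    {ε : ℝ} (hε : 0 < ε) : ∀ᶠ s in 𝓝[>] (0 : ℝ), s • v ∈ ball (0 : F) ε := by
  have hcont : ContinuousAt (fun s : ℝ => s • v) 0 := by fun_prop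
  exact nhdsWithin_le_nhds (hcont (by simpa using ball_mem_nhds 0 hε))

variable {N n : ℕ} {U : Opens (Euc n)} {γ : Euc N → Euc n → Euc n} {ρ : ℝ}
  {W : Euc N → Euc n → Euc n} {X Xh : (Fin N → ℕ) → smoothField U}

lemma taylorSum_homEval_apply (X : (Fin N → ℕ) → smoothField U) (M : ℕ) (t : Fin N → ℝ) (s : ℝ)
    (z : Euc n) :
    taylorSum M (fun k => homEval t k fun α => X α) s z =
      ∑ α ∈ multiIdxLt N M, Zhang.monomial α (s • WithLp.toLp 2 t) • X α z := by
  simp [← sum_multiIdxLt_monomial_smul]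

lemma isExpCurve_of_isExpFieldsFor (hXh : IsExpFieldsFor γ U fun α => Xh α) (t : Fin N → ℝ)
    {x : Euc n} (hx : x ∈ U) :
    IsExpCurve (fun k => homEval t k fun α => Xh α) x fun s => γ (s • WithLp.toLp 2 t) x := by
  intro M
  obtain ⟨C, ε, hε, hflow⟩ := hXh.2.2 M
  have hcurve : ∀ s : ℝ, s • WithLp.toLp 2 t ∈ ball (0 : Euc N) ε → ∃ φ : ℝ → Euc n,
      (φ 0 = x ∧ IsIntegralCurveOn φ
        (fun _ => (taylorSum M (fun k => homEval t k fun α => Xh α) s).1) (Icc 0 1)) ∧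
      ‖γ (s • WithLp.toLp 2 t) x - φ 1‖ ≤ C * ‖s • WithLp.toLp 2 t‖ ^ M := fun s hs => by
    obtain ⟨_, ⟨φ, hφ0, rfl, hφ⟩, hle⟩ := hflow _ hs x hx
    refine ⟨φ, ⟨hφ0, fun τ hτ => ?_⟩, hle⟩
    exact (hφ τ hτ).hasDerivWithinAt.congr_deriv (taylorSum_homEval_apply Xh M t s (φ τ)).symm
  choose! φ hφ hle using hcurve
  have hball := eventually_smul_mem_ball (WithLp.toLp 2 t) hε
  exact ⟨φ, hball.mono hφ, isBigO_pow_of_eventually_norm_le (hball.mono hle)⟩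

lemma hasDerivAt_ray_of_isWFor (hW : IsWFor γ ρ U W) {v : Euc N} {x : Euc n} {s : ℝ} (hs : s ≠ 0)
    (hv : s • v ∈ ball (0 : Euc N) ρ) (hx : x ∈ U) (hγx : γ (s • v) x ∈ U) :
    HasDerivAt (fun r : ℝ => γ (r • v) x) (s⁻¹ • W (s • v) (γ (s • v) x)) s := by
  obtain ⟨γinv, hinv, hderiv⟩ := hW
  have hone := hderiv _ hv _ hγx
  rw [(hinv _ hv x hx).2, ← mul_inv_cancel₀ hs] at hone
  have hscale : HasDerivAt (fun r : ℝ => r * s⁻¹) s⁻¹ s := by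
    simpa using (hasDerivAt_id s).mul_const s⁻¹
  refine (hone.scomp s hscale).congr_of_eventuallyEq (.of_forall fun r => ?_)
  simp [smul_smul, hs]

/-- The formal vector field `∑_α t^α X_α`, as a power series of derivations of `smoothFun U`. -/
def lieDerSeries (X : (Fin N → ℕ) → smoothField U) :
    MvPowerSeries (Fin N) (Module.End ℝ (smoothFun U)) :=
  fun α => lieDer U (X α)

lemma coeff_lieDerSeries (X : (Fin N → ℕ) → smoothField U) (α : Fin N →₀ ℕ) :
    MvPowerSeries.coeff α (lieDerSeries X) = lieDer U (X α) := rfl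

lemma restrictLine_lieDerSeries (X : (Fin N → ℕ) → smoothField U) (t : Fin N → ℝ) :
    restrictLine t (lieDerSeries X) =
      PowerSeries.mk fun k => lieDer U (homEval t k fun α => X α) := by
  ext k : 1
  rw [coeff_restrictLine t (lieDerSeries X), PowerSeries.coeff_mk, map_homEval]
  rfl

theorem euler_formalExp_lieDerSeries (hρ : 0 < ρ) (hW : IsWFor γ ρ U W)
    (hX : IsTaylorFieldOf W U fun α => X α) (hXh : IsExpFieldsFor γ U fun α => Xh α) :
    euler (formalExp ℝ (lieDerSeries Xh)) =
      formalExp ℝ (lieDerSeries Xh) * lieDerSeries X := by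
  refine euler_formalExp_eq_of_forall_restrictLine fun t => ?_
  rw [restrictLine_lieDerSeries, restrictLine_lieDerSeries]
  have hXh0 : homEval t 0 (fun α => Xh α) = 0 := by
    rw [homEval_zero_left]
    exact Subtype.ext hXh.1
  have hX0 : homEval t 0 (fun α => X α) = 0 := by
    rw [homEval_zero_left]
    exact Subtype.ext hX.1
  refine euler_formalExp_eq_of_forall_isExpCurve hXh0 hX0 fun x hx => ?_
  have hcurve := isExpCurve_of_isExpFieldsFor hXh t hx
  have hmem := hcurve.tendsto hXh0 hx (U.isOpen.mem_nhds hx)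
  have hball {ε : ℝ} (hε : 0 < ε) := eventually_smul_mem_ball (WithLp.toLp 2 t : Euc N) hε
  refine ⟨_, fun s => s⁻¹ • W (s • WithLp.toLp 2 t) (γ (s • WithLp.toLp 2 t) x), hcurve, ?_,
    fun M => ?_⟩
  · filter_upwards [self_mem_nhdsWithin, hball hρ, hmem] with s (hs : 0 < s) hsρ hγ
    exact hasDerivAt_ray_of_isWFor hW hs.ne' hsρ hx hγ
  · obtain ⟨C, ε, hε, hC⟩ := hX.2.2 M
    refine isBigO_pow_of_eventually_norm_le (v := (WithLp.toLp 2 t : Euc N)) (C := C) ?_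
    filter_upwards [self_mem_nhdsWithin, hball hε, hmem] with s (hs : 0 < s) hsε hγ
    rw [smul_inv_smul₀ hs.ne', taylorSum_homEval_apply]
    exact hC _ hsε _ hγ

end ReductionToRays

section GradedLieSpans

open TopologicalSpace (Opens)

variable {N ν n : ℕ} {U : Opens (Euc n)} {S S' : Set (VF n × Deg ν)} {d d' : Deg ν}

/-- The span of the derivations of `smoothFun U` given by the elements of `ℒ(S)` of degree `d`. -/
def lieDegSpan (U : Opens (Euc n)) (S : Set (VF n × Deg ν)) (d : Deg ν) :
    Submodule ℝ (Module.End ℝ (smoothFun U)) :=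
  Submodule.span ℝ (lieDer U '' {Y | (Y.1, d) ∈ lieSpan S})

lemma lieDer_mem_lieDegSpan {Y : smoothField U} (hY : (Y.1, d) ∈ lieSpan S) :
    lieDer U Y ∈ lieDegSpan U S d :=
  Submodule.subset_span (mem_image_of_mem _ hY)

lemma lie_mem_of_mem_span {𝕜 R : Type*} [CommRing 𝕜] [Ring R] [Algebra 𝕜 R] {s t : Set R}
    {p : Submodule 𝕜 R} (h : ∀ a ∈ s, ∀ b ∈ t, ⁅a, b⁆ ∈ p) {a b : R}
    (ha : a ∈ Submodule.span 𝕜 s) (hb : b ∈ Submodule.span 𝕜 t) : ⁅a, b⁆ ∈ p :=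
  LinearMap.BilinMap.apply_apply_mem_of_mem_span p s t
    (LinearMap.mul 𝕜 R - (LinearMap.mul 𝕜 R).flip) h a b ha hb

lemma lie_mem_lieDegSpan {a b : Module.End ℝ (smoothFun U)} (ha : a ∈ lieDegSpan U S d)
    (hb : b ∈ lieDegSpan U S d') : ⁅a, b⁆ ∈ lieDegSpan U S (d + d') := by
  refine lie_mem_of_mem_span (R := Module.End ℝ (smoothFun U)) ?_ ha hb
  rintro _ ⟨Y, hY, rfl⟩ _ ⟨Z, hZ, rfl⟩
  rw [← lieDer_lieBracket]
  exact lieDer_mem_lieDegSpan (LieGen.bracket hY hZ)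

lemma exists_lieDer_mem_lieDegSpan_of_mem_lieSpan
    (hS : ∀ P ∈ S, ∃ Y : smoothField U, Y.1 = P.1 ∧ lieDer U Y ∈ lieDegSpan U S' P.2)
    {P : VF n × Deg ν} (hP : P ∈ lieSpan S) :
    ∃ Y : smoothField U, Y.1 = P.1 ∧ lieDer U Y ∈ lieDegSpan U S' P.2 := by
  induction hP with
  | base hP => exact hS _ hP
  | bracket _ _ hX hY =>
    obtain ⟨X, rfl, hX⟩ := hX
    obtain ⟨Y, rfl, hY⟩ := hY
    exact ⟨_, rfl, lieDer_lieBracket X Y ▸ lie_mem_lieDegSpan hX hY⟩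

lemma isConstCombOf_of_lieDer_mem_lieDegSpan (h0 : 0 ∈ U) {Y : smoothField U}
    (hY : lieDer U Y ∈ lieDegSpan U S d) : IsConstCombOf (lieSpan S) (Y.1, d) := by
  obtain ⟨k, c, g, hg⟩ := Submodule.mem_span_set'.1 hY
  choose Z hZ hZg using fun j => (g j).2
  refine ⟨k, c, fun j => (Z j).1, hZ, U, U.isOpen, h0, fun x hx => ?_⟩
  have hcomb : lieDer U Y = lieDer U (∑ j, c j • Z j) := by
    simp only [map_sum, map_smul, hZg, hg]
  simpa using eqOn_of_lieDer_eq hcomb hx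

/-- The coefficient fields `X_α` whose degree satisfies `Q`, paired with their degree. -/
def coeffSet (e : Fin N → Fin ν → ℝ) (Q : Deg ν → Prop) (X : (Fin N → ℕ) → VF n) :
    Set (VF n × Deg ν) :=
  {P | ∃ α : Fin N → ℕ, α ≠ 0 ∧ Q (degMulti e α) ∧ P = (X α, degMulti e α)}

lemma pureSet_eq_coeffSet (e : Fin N → Fin ν → ℝ) (X : (Fin N → ℕ) → VF n) :
    pureSet e X = coeffSet e IsPureDeg X := rfl

lemma pureSet_union_nonpureSet (e : Fin N → Fin ν → ℝ) (X : (Fin N → ℕ) → VF n) :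
    pureSet e X ∪ nonpureSet e X = coeffSet e (fun _ => True) X := by
  ext P
  simp only [pureSet, nonpureSet, coeffSet, mem_union, mem_ofPred_eq, ← exists_or]
  exact exists_congr fun α => by tauto

lemma degMulti_add (e : Fin N → Fin ν → ℝ) (α β : Fin N → ℕ) :
    degMulti e (α + β) = degMulti e α + degMulti e β := by
  funext μ
  simp [degMulti, add_mul, Finset.sum_add_distrib]

lemma degMulti_nonneg {e : Fin N → Fin ν → ℝ} (he : ∀ i μ, 0 ≤ e i μ) (α : Fin N → ℕ) :
    0 ≤ degMulti e α := fun μ =>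
  Finset.sum_nonneg fun i _ => mul_nonneg (Nat.cast_nonneg _) (he i μ)

lemma degMulti_ne_zero {e : Fin N → Fin ν → ℝ} (he : ∀ i μ, 0 ≤ e i μ)
    (he' : ∀ i, ∃ μ, e i μ ≠ 0) {α : Fin N → ℕ} (hα : α ≠ 0) : degMulti e α ≠ 0 := by
  obtain ⟨i, hi⟩ := Function.ne_iff.1 hα
  obtain ⟨μ, hμ⟩ := he' i
  have hterm : 0 < (α i : ℝ) * e i μ :=
    mul_pos (Nat.cast_pos.2 (Nat.pos_of_ne_zero hi)) ((he i μ).lt_of_ne' hμ)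
  exact Function.ne_iff.2 ⟨μ, ne_of_gt (Finset.sum_pos'
    (fun j _ => mul_nonneg (Nat.cast_nonneg _) (he j μ)) ⟨i, Finset.mem_univ i, hterm⟩)⟩

lemma isPureDeg_left_of_isPureDeg_add (hd : 0 ≤ d) (hd' : 0 ≤ d') (hd0 : d ≠ 0)
    (h : IsPureDeg (d + d')) : IsPureDeg d := by
  obtain ⟨μ, -, hμ⟩ := h
  have hsupp : ∀ κ, d κ ≠ 0 → κ = μ := fun κ hκ =>
    hμ κ (ne_of_gt (add_pos_of_pos_of_nonneg ((hd κ).lt_of_ne' hκ) (hd' κ)))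
  obtain ⟨κ, hκ⟩ := Function.ne_iff.1 hd0
  exact ⟨κ, hκ, fun κ' h' => (hsupp κ' h').trans (hsupp κ hκ).symm⟩

/-- The grading by multi-indices of the derivations generated by the coefficient fields `X_α` whose
degree satisfies `Q`. It is `⊤` at the multi-indices whose degree does not satisfy `Q`. -/
def coeffGrading (e : Fin N → Fin ν → ℝ) (Q : Deg ν → Prop) (X : (Fin N → ℕ) → smoothField U)
    (α : Fin N →₀ ℕ) : Submodule ℝ (Module.End ℝ (smoothFun U)) :=
  ⨅ _ : Q (degMulti e α), lieDegSpan U (coeffSet e Q fun α => X α) (degMulti e α)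

variable {e : Fin N → Fin ν → ℝ} {Q : Deg ν → Prop} {X Y : (Fin N → ℕ) → smoothField U}

lemma mem_coeffGrading {α : Fin N →₀ ℕ} {a : Module.End ℝ (smoothFun U)} :
    a ∈ coeffGrading e Q X α ↔ Q (degMulti e α) →
      a ∈ lieDegSpan U (coeffSet e Q fun α => X α) (degMulti e α) :=
  Submodule.mem_iInf _

lemma isLieGraded_coeffGrading
    (hQ : ∀ α β : Fin N → ℕ, α ≠ 0 → Q (degMulti e α + degMulti e β) → Q (degMulti e α)) :
    IsLieGraded (R := Module.End ℝ (smoothFun U)) (coeffGrading e Q X) := by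
  intro β γ hβ hγ a b ha hb
  have hdeg : degMulti e ⇑(β + γ) = degMulti e β + degMulti e γ := degMulti_add e β γ
  rw [mem_coeffGrading, hdeg]
  intro h
  have hQβ : Q (degMulti e β) := hQ β γ (fun h => hβ (DFunLike.coe_injective h)) h
  have hQγ : Q (degMulti e γ) := hQ γ β (fun h => hγ (DFunLike.coe_injective h)) (by rwa [add_comm])
  exact lie_mem_lieDegSpan (mem_coeffGrading.1 ha hQβ) (mem_coeffGrading.1 hb hQγ)

lemma coeff_lieDerSeries_mem_coeffGrading (hX : X 0 = 0) (α : Fin N →₀ ℕ) :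
    MvPowerSeries.coeff α (lieDerSeries X) ∈ coeffGrading e Q X α := by
  refine mem_coeffGrading.2 fun hQ => ?_
  rcases eq_or_ne α 0 with rfl | hα
  · rw [coeff_lieDerSeries, Finsupp.coe_zero, hX, map_zero]
    exact zero_mem _
  · exact lieDer_mem_lieDegSpan (LieGen.base ⟨α, fun h => hα (DFunLike.coe_injective h), hQ, rfl⟩)

lemma isConstCombOf_of_coeff_mem_coeffGrading (h0 : 0 ∈ U)
    (h : ∀ α, MvPowerSeries.coeff α (lieDerSeries X) ∈ coeffGrading e Q Y α) :
    ∀ P ∈ lieSpan (coeffSet e Q fun α => X α),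
      IsConstCombOf (lieSpan (coeffSet e Q fun α => Y α)) P := by
  rintro ⟨V, d⟩ hP
  have hS : ∀ P ∈ coeffSet e Q fun α => X α, ∃ Z : smoothField U, Z.1 = P.1 ∧
      lieDer U Z ∈ lieDegSpan U (coeffSet e Q fun α => Y α) P.2 := by
    rintro _ ⟨α, -, hQα, rfl⟩
    have hα := h (Finsupp.equivFunOnFinite.symm α)
    rw [mem_coeffGrading, coeff_lieDerSeries, Finsupp.coe_equivFunOnFinite_symm] at hα
    exact ⟨X α, rfl, hα hQα⟩
  obtain ⟨Z, rfl, hZ⟩ := exists_lieDer_mem_lieDegSpan_of_mem_lieSpan hS hP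
  exact isConstCombOf_of_lieDer_mem_lieDegSpan h0 hZ

theorem isConstCombOf_of_euler_formalExp (h0 : 0 ∈ U)
    (hQ : ∀ α β : Fin N → ℕ, α ≠ 0 → Q (degMulti e α + degMulti e β) → Q (degMulti e α))
    {Xh : (Fin N → ℕ) → smoothField U} (hX0 : X 0 = 0) (hXh0 : Xh 0 = 0)
    (h : euler (formalExp ℝ (lieDerSeries Xh)) =
      formalExp ℝ (lieDerSeries Xh) * lieDerSeries X) :
    (∀ P ∈ lieSpan (coeffSet e Q fun α => X α),
        IsConstCombOf (lieSpan (coeffSet e Q fun α => Xh α)) P) ∧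
      ∀ P ∈ lieSpan (coeffSet e Q fun α => Xh α),
        IsConstCombOf (lieSpan (coeffSet e Q fun α => X α)) P := by
  have hA0 : (lieDerSeries Xh).constantCoeff = 0 := by
    rw [← MvPowerSeries.coeff_zero_eq_constantCoeff_apply, coeff_lieDerSeries, Finsupp.coe_zero,
      hXh0, map_zero]
  have hiff (Z : (Fin N → ℕ) → smoothField U) :=
    coeff_mem_iff_of_euler_formalExp (R := Module.End ℝ (smoothFun U))
      (isLieGraded_coeffGrading (X := Z) hQ) hA0 h
  exact ⟨isConstCombOf_of_coeff_mem_coeffGrading h0 <|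
      (hiff Xh).1 (coeff_lieDerSeries_mem_coeffGrading hXh0),
    isConstCombOf_of_coeff_mem_coeffGrading h0 <|
      (hiff X).2 (coeff_lieDerSeries_mem_coeffGrading hX0)⟩

end GradedLieSpans

theorem statement_9_general {N ν n : ℕ} (e : Fin N → Fin ν → ℝ) (he : ∀ i μ, 0 ≤ e i μ)
    (he' : ∀ i, ∃ μ, e i μ ≠ 0) (γ : Euc N → Euc n → Euc n) (ρ : ℝ) (hρ : 0 < ρ)
    (U : Set (Euc n)) (hU : IsOpen U) (h0U : (0 : Euc n) ∈ U)
    (W : Euc N → Euc n → Euc n) (hW : IsWFor γ ρ U W)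
    (X : (Fin N → ℕ) → VF n) (hX : IsTaylorFieldOf W U X)
    (Xh : (Fin N → ℕ) → VF n) (hXh : IsExpFieldsFor γ U Xh) :
    (∀ P ∈ lieSpan (pureSet e X ∪ nonpureSet e X),
        IsConstCombOf (lieSpan (pureSet e Xh ∪ nonpureSet e Xh)) P) ∧
    (∀ P ∈ lieSpan (pureSet e X), IsConstCombOf (lieSpan (pureSet e Xh)) P) ∧
    (∀ P ∈ lieSpan (pureSet e Xh ∪ nonpureSet e Xh),
        IsConstCombOf (lieSpan (pureSet e X ∪ nonpureSet e X)) P) ∧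
    (∀ P ∈ lieSpan (pureSet e Xh), IsConstCombOf (lieSpan (pureSet e X)) P) := by
  lift U to TopologicalSpace.Opens (Euc n) using hU
  lift X to (Fin N → ℕ) → smoothField U using hX.2.1
  lift Xh to (Fin N → ℕ) → smoothField U using hXh.2.1
  have heuler := euler_formalExp_lieDerSeries hρ hW hX hXh
  have hX0 : X 0 = 0 := Subtype.ext hX.1
  have hXh0 : Xh 0 = 0 := Subtype.ext hXh.1
  have hall := isConstCombOf_of_euler_formalExp (e := e) (Q := fun _ => True) h0U
    (fun _ _ _ _ => trivial) hX0 hXh0 heuler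
  have hpure := isConstCombOf_of_euler_formalExp (e := e) (Q := IsPureDeg) h0U
    (fun α β hα => isPureDeg_left_of_isPureDeg_add (degMulti_nonneg he α) (degMulti_nonneg he β)
      (degMulti_ne_zero he he' hα)) hX0 hXh0 heuler
  rw [pureSet_union_nonpureSet, pureSet_union_nonpureSet, pureSet_eq_coeffSet, pureSet_eq_coeffSet]
  exact ⟨hall.1, hpure.1, hall.2, hpure.2⟩

/-- Theorem 6.5: equivalence of the families `{X_α}` and `{X̂_α}`. -/
theorem statement_9 {N ν n : ℕ} (hn : 0 < n)
    (e : Fin N → Fin ν → ℝ) (he : AdmissibleE e)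
    (γ : Euc N → Euc n → Euc n) (ρ₀ : ℝ) (hρ₀ : 0 < ρ₀)
    (U₀ : Set (Euc n)) (hU₀ : IsOpen U₀) (h0U₀ : (0 : Euc n) ∈ U₀)
    (hγ : ContDiffOn ℝ (⊤ : ℕ∞) (fun q : Euc N × Euc n => γ q.1 q.2) (ball 0 ρ₀ ×ˢ U₀))
    (hγ0 : ∀ x ∈ U₀, γ 0 x = x)
    (ρ₁ : ℝ) (U₁ : Set (Euc n)) (hρ₁ : 0 < ρ₁) (hρ₁' : ρ₁ ≤ ρ₀)
    (hU₁ : IsOpen U₁) (h0U₁ : (0 : Euc n) ∈ U₁) (hU₁' : U₁ ⊆ U₀)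
    (W : Euc N → Euc n → Euc n) (hW : IsWFor γ ρ₁ U₁ W)
    (X : (Fin N → ℕ) → VF n) (hX : IsTaylorFieldOf W U₁ X)
    (Xh : (Fin N → ℕ) → VF n) (hXh : IsExpFieldsFor γ U₁ Xh) :
    (∀ P ∈ lieSpan (pureSet e X ∪ nonpureSet e X),
        IsConstCombOf (lieSpan (pureSet e Xh ∪ nonpureSet e Xh)) P) ∧
    (∀ P ∈ lieSpan (pureSet e X), IsConstCombOf (lieSpan (pureSet e Xh)) P) ∧
    (∀ P ∈ lieSpan (pureSet e Xh ∪ nonpureSet e Xh),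
        IsConstCombOf (lieSpan (pureSet e X ∪ nonpureSet e X)) P) ∧
    (∀ P ∈ lieSpan (pureSet e Xh), IsConstCombOf (lieSpan (pureSet e X)) P) :=
  statement_9_general e he.1 he.2.1 γ ρ₁ hρ₁ U₁ hU₁ h0U₁ W hW X hX Xh hXh
end
end

section
/- Let e = {(1,0),(0,1)} (so that 𝒦(2,e,a,2) is a class of product kernels supported in B²(a)). For every a > 0 there exists K ∈ 𝒦(2,e,a,2) such that the operator T_K f(x) = ∫f(x − s³ − t³ − st)K(s,t)ds dt is not bounded on L²(ℝ). -/
open MeasureTheory Metric Filter Set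
open scoped ENNReal NNReal Topology

noncomputable section

open Zhang

/-- The product-kernel dilation data on `ℝ²`: `e = {(1,0),(0,1)}`. -/
def eProd : Fin 2 → Fin 2 → ℝ := fun i μ => if i = μ then 1 else 0

/-!
Replacing `t` by `2^(-k)t` and rescaling the line by `2^(k₀+k₁)` preserves the saddle `t₀t₁`,
while a remainder `R(t) = O(|t|³)` of the phase becomes `O(2^(k₀+k₁-3 min k))`, which is
negligible when `k₀` and `k₁` are comparable. Hence, on a block of `m + 1` comparable indices
with `k₀ + k₁` constant, one rescaling of the line turns every piece of the operator into nearly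
the same average along `t₀t₁`. Since `t₀t₁` is odd in each variable, a profile `ς` odd in each
variable satisfies both cancellation conditions without making this average vanish: it maps some
test function to one which is positive near `0`. The pieces therefore add up to an operator of
norm at least a constant times `m`. The kernel lives on sparse blocks of unbounded size, so that
the difference of two truncations isolates a single block.
-/

/-! ### Odd bumps and the cancellation condition -/

open Classical in
theorem cancelCond_of_neg {N ν : ℕ} {e : Fin N → Fin ν → ℝ} {μ : Fin ν} {g : Euc N → ℝ}
    (hg : ∀ t : Euc N, g (WithLp.toLp 2 fun i => if e i μ ≠ 0 then -t i else t i) = -g t) :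
    CancelCond e μ g := by
  intro t
  refine self_eq_neg.mp ?_
  rw [← integral_neg]
  nth_rw 1 [← integral_neg_eq_self]
  congr 1 with s
  rw [← hg]
  congr 1
  ext i
  by_cases h : e i μ = 0 <;> simp [h]

theorem cancelCond_zero {N ν : ℕ} (e : Fin N → Fin ν → ℝ) (μ : Fin ν) :
    CancelCond e μ (0 : Euc N → ℝ) := by
  intro t
  simp only [Pi.zero_apply, integral_zero]

theorem isKernelSeq_indicator_const {N ν : ℕ} {e : Fin N → Fin ν → ℝ} {a : ℝ} {ς : Euc N → ℝ}
    (hς : ContDiff ℝ (⊤ : ℕ∞) ς) (hsupp : tsupport ς ⊆ ball 0 a)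
    (hcancel : ∀ μ, CancelCond e μ ς) (S : Set (Fin ν → ℕ)) :
    IsKernelSeq e a (S.indicator fun _ => ς) := by
  have hS : ∀ k, S.indicator (fun _ => ς) k = 0 ∨ S.indicator (fun _ => ς) k = ς :=
    fun k => indicator_eq_zero_or_self S _ k
  refine ⟨fun k => ?_, fun k => ?_,
    fun m => ⟨max (CmSupNorm m (0 : Euc N → ℝ)) (CmSupNorm m ς), fun k => ?_⟩, fun k μ _ => ?_⟩
  all_goals rcases hS k with h | h <;> rw [h]
  · exact contDiff_const
  · exact hς
  · simp only [tsupport_zero, empty_subset]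
  · exact hsupp
  · exact le_max_left _ _
  · exact le_max_right _ _
  · exact cancelCond_zero e μ
  · exact hcancel μ

/-- The odd test function `u ↦ u b(u)` attached to a bump function `b` centred at `0`. -/
def oddBump (b : ContDiffBump (0 : ℝ)) (u : ℝ) : ℝ := u * b u

/-- The tensor product of an odd bump with itself; oddness in each variable makes it satisfy every
cancellation condition. -/
def oddBumpTensor (b : ContDiffBump (0 : ℝ)) (t : Euc 2) : ℝ := oddBump b (t 0) * oddBump b (t 1)

section OddBump

variable (b : ContDiffBump (0 : ℝ))

theorem oddBump_neg (u : ℝ) : oddBump b (-u) = -oddBump b u := by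
  rw [oddBump, oddBump, b.neg, neg_mul]

theorem contDiff_oddBump : ContDiff ℝ (⊤ : ℕ∞) (oddBump b) :=
  contDiff_id.mul b.contDiff

theorem hasCompactSupport_oddBump : HasCompactSupport (oddBump b) :=
  b.hasCompactSupport.mul_left

theorem abs_lt_rOut_of_oddBump_ne_zero {u : ℝ} (hu : oddBump b u ≠ 0) : |u| < b.rOut := by
  have hmem : u ∈ Function.support b := right_ne_zero_of_mul hu
  rwa [b.support_eq, mem_ball_zero_iff, Real.norm_eq_abs] at hmem

theorem contDiff_oddBumpTensor : ContDiff ℝ (⊤ : ℕ∞) (oddBumpTensor b) :=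
  ((contDiff_oddBump b).comp (by fun_prop)).mul ((contDiff_oddBump b).comp (by fun_prop))

theorem tsupport_oddBumpTensor_subset :
    tsupport (oddBumpTensor b) ⊆ closedBall (0 : Euc 2) (√2 * b.rOut) := by
  refine closure_minimal (fun t ht => ?_) isClosed_closedBall
  have h0 : |t 0| < b.rOut := abs_lt_rOut_of_oddBump_ne_zero b (left_ne_zero_of_mul ht)
  have h1 : |t 1| < b.rOut := abs_lt_rOut_of_oddBump_ne_zero b (right_ne_zero_of_mul ht)
  rw [mem_closedBall_zero_iff, EuclideanSpace.norm_eq, Fin.sum_univ_two,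
    ← Real.sqrt_sq b.rOut_pos.le, ← Real.sqrt_mul zero_le_two]
  simp only [Real.norm_eq_abs]
  gcongr
  nlinarith [abs_nonneg (t 0), abs_nonneg (t 1)]

theorem hasCompactSupport_oddBumpTensor : HasCompactSupport (oddBumpTensor b) :=
  (isCompact_closedBall _ _).of_isClosed_subset (isClosed_tsupport _)
    (tsupport_oddBumpTensor_subset b)

theorem cancelCond_eProd_oddBumpTensor (μ : Fin 2) : CancelCond eProd μ (oddBumpTensor b) := by
  refine cancelCond_of_neg fun t => ?_
  fin_cases μ <;> simp [eProd, oddBumpTensor, oddBump_neg]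

end OddBump

/-! ### Blocks of indices -/

theorem mem_trunc {ν M : ℕ} {k : Fin ν → ℕ} : k ∈ trunc ν M ↔ ∀ μ, k μ ≤ M := by
  simp only [trunc, Finset.mem_image, Finset.mem_univ, true_and]
  constructor
  · rintro ⟨k, rfl⟩ μ
    exact Nat.lt_succ_iff.mp (k μ).2
  · exact fun h => ⟨fun μ => ⟨k μ, Nat.lt_succ_iff.mpr (h μ)⟩, rfl⟩

/-- The `m + 1` indices `(4m + i, 4m - i)`, `0 ≤ i ≤ m`, all of which dilate `t₀t₁` by the same
factor `2^(8m)`. -/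
def diagonalBlock (m : ℕ) : Finset (Fin 2 → ℕ) :=
  (Finset.range (m + 1)).image fun i => ![4 * m + i, 4 * m - i]

theorem mem_diagonalBlock {m : ℕ} {k : Fin 2 → ℕ} :
    k ∈ diagonalBlock m ↔ k 0 + k 1 = 8 * m ∧ 4 * m ≤ k 0 ∧ k 0 ≤ 5 * m := by
  rw [diagonalBlock, Finset.mem_image]
  constructor
  · rintro ⟨i, hi, rfl⟩
    rw [Finset.mem_range] at hi
    simp only [Matrix.cons_val_zero, Matrix.cons_val_one]
    lia
  · rintro ⟨hsum, hlow, hup⟩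
    refine ⟨k 0 - 4 * m, Finset.mem_range.mpr (by lia), ?_⟩
    ext μ
    fin_cases μ
    · exact Nat.add_sub_cancel' hlow
    · change 4 * m - (k 0 - 4 * m) = k 1
      lia

theorem card_diagonalBlock (m : ℕ) : (diagonalBlock m).card = m + 1 := by
  rw [diagonalBlock, Finset.card_image_of_injective, Finset.card_range]
  intro i i' h
  exact Nat.add_left_cancel (congrFun h 0)

/-- The union of the blocks of dyadic size. Their ranges `[4·2^j, 5·2^j]` of the largest coordinate
are disjoint, so two cubic truncations isolate a single block. -/
def dyadicBlocks : Set (Fin 2 → ℕ) := ⋃ j : ℕ, diagonalBlock (2 ^ j)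

theorem dyadicBlocks_inter_trunc_sdiff (j : ℕ) :
    dyadicBlocks ∩ ↑(trunc 2 (5 * 2 ^ j) \ trunc 2 (4 * 2 ^ j - 1)) =
      (diagonalBlock (2 ^ j) : Set (Fin 2 → ℕ)) := by
  have hpos : 0 < 2 ^ j := Nat.two_pow_pos j
  ext k
  simp only [dyadicBlocks, mem_inter_iff, mem_iUnion, Finset.mem_coe, Finset.mem_sdiff, mem_trunc,
    Fin.forall_fin_two, mem_diagonalBlock]
  refine ⟨?_, fun h => ⟨⟨j, h⟩, by lia⟩⟩
  rintro ⟨⟨i, hi⟩, hk⟩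
  have hij : i = j := by
    by_contra hne
    rcases Nat.lt_or_gt_of_ne hne with hlt | hlt
    · have : 2 ^ (i + 1) ≤ 2 ^ j := Nat.pow_le_pow_right two_pos hlt
      lia
    · have : 2 ^ (j + 1) ≤ 2 ^ i := Nat.pow_le_pow_right two_pos hlt
      lia
  exact hij ▸ hi

theorem sum_trunc_sub_sum_trunc {E : Type*} [AddCommGroup E] {S : (Fin 2 → ℕ) → E}
    (hS : ∀ k ∉ dyadicBlocks, S k = 0) (j : ℕ) :
    ∑ k ∈ trunc 2 (5 * 2 ^ j), S k - ∑ k ∈ trunc 2 (4 * 2 ^ j - 1), S k =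
      ∑ k ∈ diagonalBlock (2 ^ j), S k := by
  rw [← Finset.sum_sdiff_eq_sub]
  · refine (Finset.sum_subset (fun k hk => ?_) fun k hk hk' => hS k fun hmem => ?_).symm
    · exact ((dyadicBlocks_inter_trunc_sdiff j).superset hk).2
    · exact hk' ((dyadicBlocks_inter_trunc_sdiff j).subset ⟨hmem, hk⟩)
  · intro k hk
    rw [mem_trunc] at hk ⊢
    exact fun μ => (hk μ).trans (by lia)

/-! ### Dilations -/

section Dilate

variable {N ν : ℕ} {e : Fin N → Fin ν → ℝ} {δ : Fin ν → ℝ}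

theorem dpow_pos (hδ : ∀ μ, 0 < δ μ) (d : Fin ν → ℝ) : 0 < dpow δ d :=
  Finset.prod_pos fun μ _ => Real.rpow_pos_of_pos (hδ μ) _

theorem dpow_inv (hδ : ∀ μ, 0 < δ μ) (d : Fin ν → ℝ) : dpow δ⁻¹ d = (dpow δ d)⁻¹ := by
  simp only [dpow, Pi.inv_apply, ← Finset.prod_inv_distrib, Real.inv_rpow (hδ _).le]

theorem dilate_inv_dilate (hδ : ∀ μ, 0 < δ μ) (t : Euc N) : dilate e δ⁻¹ (dilate e δ t) = t := by
  ext i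
  simp [dilate, dpow_inv hδ, (dpow_pos hδ (e i)).ne']

theorem continuous_dilate (e : Fin N → Fin ν → ℝ) (δ : Fin ν → ℝ) : Continuous (dilate e δ) :=
  (EuclideanSpace.equiv (Fin N) ℝ).symm.continuous.comp (by fun_prop)

theorem continuous_scaled (e : Fin N → Fin ν → ℝ) {ς : Euc N → ℝ} (hς : Continuous ς)
    (δ : Fin ν → ℝ) : Continuous (scaled e ς δ) :=
  continuous_const.mul (hς.comp (continuous_dilate e δ))

theorem prod_dpow_mul_integral_comp_dilate (hδ : ∀ μ, 0 < δ μ) (G : Euc N → ℝ) :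
    (∏ i, dpow δ (e i)) * ∫ t, G (dilate e δ t) = ∫ t, G t := by
  set D : Fin N → ℝ := fun i => dpow δ (e i)
  have hD0 : ∀ i, D i ≠ 0 := fun i => (dpow_pos hδ (e i)).ne'
  have hdet : (Matrix.diagonal D).det = ∏ i, D i := Matrix.det_diagonal
  have hpos : 0 < ∏ i, D i := Finset.prod_pos fun i _ => dpow_pos hδ (e i)
  have hcoe : ⇑(Matrix.toLin' (Matrix.diagonal D)) =
      Homeomorph.piCongrRight fun i => Homeomorph.mulLeft₀ (D i) (hD0 i) := by
    ext p i
    simp [Matrix.mulVec_diagonal]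
  have htoLp := (EuclideanSpace.volume_preserving_symm_measurableEquiv_toLp (Fin N)).symm
  rw [← htoLp.integral_comp', ← htoLp.integral_comp']
  conv_rhs => rw [← Real.smul_map_diagonal_volume_pi (hdet.trans_ne hpos.ne')]
  rw [integral_smul_measure, hcoe, (Homeomorph.measurableEmbedding _).integral_map, hdet,
    ENNReal.toReal_ofReal (abs_nonneg _), abs_of_pos hpos, smul_eq_mul]
  rfl

theorem integral_mul_scaled (hδ : ∀ μ, 0 < δ μ) (F ς : Euc N → ℝ) :
    ∫ t, F t * scaled e ς δ t = ∫ t, F (dilate e δ⁻¹ t) * ς t := by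
  rw [← prod_dpow_mul_integral_comp_dilate (e := e) hδ fun t => F (dilate e δ⁻¹ t) * ς t,
    ← integral_const_mul]
  simp only [dilate_inv_dilate hδ, scaled, mul_left_comm]

end Dilate

theorem dilate_eProd_apply (δ : Fin 2 → ℝ) (t : Euc 2) (i : Fin 2) :
    dilate eProd δ t i = δ i * t i := by
  fin_cases i <;> simp [dilate, dpow, eProd]

theorem norm_dilate_eProd_le {δ : Fin 2 → ℝ} {c : ℝ} (hδ : ∀ i, |δ i| ≤ c) (t : Euc 2) :
    ‖dilate eProd δ t‖ ≤ c * ‖t‖ := by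
  have hc : 0 ≤ c := (abs_nonneg _).trans (hδ 0)
  refine le_of_sq_le_sq ?_ (by positivity)
  simp only [mul_pow, EuclideanSpace.norm_sq_eq, dilate_eProd_apply, norm_mul, Real.norm_eq_abs,
    Finset.mul_sum]
  gcongr
  exact hδ _

/-! ### Averages along perturbed saddles -/

/-- The average `∫ g(x - R(t) - t₀t₁) ς(t) dt` of `g`. The remainder `R` is a separate argument
because the dilations `2^k` normalize `t₀t₁` and make `R` small. -/
def saddleAverage (ς R : Euc 2 → ℝ) (g : ℝ → ℝ) (x : ℝ) : ℝ :=
  ∫ t : Euc 2, g (x - R t - t 0 * t 1) * ς t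

/-- The remainder of the phase `t₀t₁ + R(t)` after `t` is replaced by `δ⁻¹t` and the phase is
multiplied by `δ₀δ₁`, which restores the coefficient of `t₀t₁`. -/
def dilatedRemainder (R : Euc 2 → ℝ) (δ : Fin 2 → ℝ) (t : Euc 2) : ℝ :=
  δ 0 * δ 1 * R (dilate eProd δ⁻¹ t)

theorem twoPow_pos {ν : ℕ} (k : Fin ν → ℕ) (μ : Fin ν) : 0 < twoPow k μ :=
  pow_pos two_pos _

theorem saddleAverage_scaled {δ : Fin 2 → ℝ} (hδ : ∀ i, 0 < δ i) (ς R : Euc 2 → ℝ) (g : ℝ → ℝ)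
    (x : ℝ) :
    saddleAverage (scaled eProd ς δ) R (fun y => g (δ 0 * δ 1 * y)) x =
      saddleAverage ς (dilatedRemainder R δ) g (δ 0 * δ 1 * x) := by
  have hphase : ∀ t : Euc 2, δ 0 * δ 1 * (x - R (dilate eProd δ⁻¹ t) -
      dilate eProd δ⁻¹ t 0 * dilate eProd δ⁻¹ t 1) =
        δ 0 * δ 1 * x - dilatedRemainder R δ t - t 0 * t 1 := by
    intro t
    have h0 := (hδ 0).ne'
    have h1 := (hδ 1).ne'
    simp only [dilate_eProd_apply, dilatedRemainder, Pi.inv_apply]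
    field_simp
  rw [saddleAverage, integral_mul_scaled hδ
    fun t => g (δ 0 * δ 1 * (x - R t - t 0 * t 1))]
  simp only [hphase, saddleAverage]

theorem continuous_dilatedRemainder {R : Euc 2 → ℝ} (hR : Continuous R) (δ : Fin 2 → ℝ) :
    Continuous (dilatedRemainder R δ) :=
  continuous_const.mul (hR.comp (continuous_dilate eProd δ⁻¹))

theorem stronglyMeasurable_saddleAverage {ς R : Euc 2 → ℝ} {g : ℝ → ℝ} (hς : Continuous ς)
    (hR : Continuous R) (hg : Continuous g) : StronglyMeasurable (saddleAverage ς R g) := by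
  have h : Continuous (Function.uncurry fun (x : ℝ) (t : Euc 2) =>
      g (x - R t - t 0 * t 1) * ς t) := by
    unfold Function.uncurry
    fun_prop
  exact h.stronglyMeasurable.integral_prod_right

theorem exists_forall_le_saddleAverage {ς : Euc 2 → ℝ} {g : ℝ → ℝ} (hς : Continuous ς)
    (hςc : HasCompactSupport ς) (hg : UniformContinuous g) (hpos : 0 < saddleAverage ς 0 g 0) :
    ∃ c > 0, ∃ δ > 0, ∀ R : Euc 2 → ℝ, Continuous R → (∀ t ∈ tsupport ς, |R t| < δ) →
      ∀ x, |x| < δ → c ≤ saddleAverage ς R g x := by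
  set A := saddleAverage ς 0 g 0
  set I := ∫ t, |ς t|
  have hI : 0 ≤ I := integral_nonneg fun t => abs_nonneg _
  have hint : ∀ (R : Euc 2 → ℝ) (x : ℝ), Continuous R →
      Integrable fun t => g (x - R t - t 0 * t 1) * ς t := fun R x hR =>
    ((hg.continuous.comp (by fun_prop)).mul hς).integrable_of_hasCompactSupport hςc.mul_left
  obtain ⟨δ, hδ, hgδ⟩ := Metric.uniformContinuous_iff.mp hg (A / (2 * (I + 1))) (by positivity)
  refine ⟨A / 2, by positivity, δ / 2, by positivity, fun R hR hRδ x hx => ?_⟩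
  have hpointwise : ∀ t, ‖g (0 - (0 : Euc 2 → ℝ) t - t 0 * t 1) * ς t -
      g (x - R t - t 0 * t 1) * ς t‖ ≤ A / (2 * (I + 1)) * |ς t| := by
    intro t
    rw [← sub_mul, norm_mul, Real.norm_eq_abs (ς t)]
    by_cases ht : t ∈ tsupport ς
    · gcongr
      refine (hgδ ?_).le
      have habs := abs_sub (R t) x
      rw [Real.dist_eq, Pi.zero_apply]
      calc |0 - 0 - t 0 * t 1 - (x - R t - t 0 * t 1)| = |R t - x| := by ring_nf
        _ < δ := by linarith [hRδ t ht]
    · simp [image_eq_zero_of_notMem_tsupport ht]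
  have hclose : A - saddleAverage ς R g x ≤ A / 2 := by
    calc A - saddleAverage ς R g x
        ≤ ‖∫ t, (g (0 - (0 : Euc 2 → ℝ) t - t 0 * t 1) * ς t -
            g (x - R t - t 0 * t 1) * ς t)‖ := by
          rw [integral_sub (hint 0 0 continuous_const) (hint R x hR)]
          exact le_abs_self _
      _ ≤ A / (2 * (I + 1)) * I := by
          rw [← integral_const_mul]
          exact norm_integral_le_of_norm_le
            ((hς.abs.integrable_of_hasCompactSupport hςc.abs).const_mul _) (ae_of_all _ hpointwise)
      _ ≤ A / 2 := by
          rw [div_mul_eq_mul_div, div_le_div_iff₀ (by positivity) two_pos]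
          linarith [mul_nonneg hpos.le hI]
  linarith

theorem saddleAverage_oddBumpTensor_pos (b : ContDiffBump (0 : ℝ)) :
    0 < saddleAverage (oddBumpTensor b) 0 (fun y => -oddBump b y) 0 := by
  have hintegrand : ∀ t : Euc 2,
      -oddBump b (0 - (0 : Euc 2 → ℝ) t - t 0 * t 1) * oddBumpTensor b t =
        (t 0 * t 1) ^ 2 * (b (t 0 * t 1) * (b (t 0) * b (t 1))) := by
    intro t
    rw [Pi.zero_apply, sub_zero, zero_sub, oddBump_neg]
    simp only [oddBumpTensor, oddBump]
    ring
  have hb : Continuous b := b.continuous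
  simp only [saddleAverage, hintegrand]
  set u : ℝ := min b.rIn 1
  have hu : 0 < u := lt_min b.rIn_pos one_pos
  have hbu : ∀ v : ℝ, 0 ≤ v → v ≤ u → b v = 1 := fun v hv hvu =>
    b.one_of_mem_closedBall (by simpa [abs_of_nonneg hv] using hvu.trans (min_le_left _ _))
  refine Continuous.integral_pos_of_hasCompactSupport_nonneg_nonzero
    (x := WithLp.toLp 2 fun _ => u) (by fun_prop) ?_ (fun t => ?_) ?_
  · have hsupp : HasCompactSupport fun t : Euc 2 =>
        -oddBump b (0 - (0 : Euc 2 → ℝ) t - t 0 * t 1) * oddBumpTensor b t :=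
      (hasCompactSupport_oddBumpTensor b).mul_left
    simpa only [hintegrand] using hsupp
  · exact mul_nonneg (sq_nonneg _) (mul_nonneg b.nonneg (mul_nonneg b.nonneg b.nonneg))
  · have huu : u * u ≤ u := mul_le_of_le_one_left hu.le (min_le_right _ _)
    simp [hbu u hu.le le_rfl, hbu _ (mul_nonneg hu.le hu.le) huu, hu.ne']

/-! ### Decay of the remainder on a block -/

theorem twoPow_mul_twoPow_of_mem_diagonalBlock {m : ℕ} {k : Fin 2 → ℕ}
    (hk : k ∈ diagonalBlock m) : twoPow k 0 * twoPow k 1 = 2 ^ (8 * m) := by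
  rw [twoPow, twoPow, ← pow_add, (mem_diagonalBlock.mp hk).1]

theorem norm_dilate_twoPow_inv_le {m : ℕ} {k : Fin 2 → ℕ} (hk : k ∈ diagonalBlock m)
    (t : Euc 2) : ‖dilate eProd (twoPow k)⁻¹ t‖ ≤ (1 / 2) ^ (3 * m) * ‖t‖ := by
  have hk3 : ∀ μ, 3 * m ≤ k μ := by
    have := mem_diagonalBlock.mp hk
    exact Fin.forall_fin_two.mpr (by lia)
  refine norm_dilate_eProd_le (fun μ => ?_) t
  rw [Pi.inv_apply, abs_of_pos (inv_pos.mpr (twoPow_pos k μ)), one_div_pow, one_div, twoPow]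
  gcongr
  · exact one_le_two
  · exact hk3 μ

theorem eventually_abs_dilatedRemainder_lt {R : Euc 2 → ℝ} (hR : R =O[𝓝 0] fun t => ‖t‖ ^ 3)
    (r : ℝ) {δ : ℝ} (hδ : 0 < δ) :
    ∀ᶠ m : ℕ in atTop, ∀ k ∈ diagonalBlock m, ∀ t ∈ closedBall (0 : Euc 2) r,
      |dilatedRemainder R (twoPow k) t| < δ := by
  obtain ⟨C, hC, hRC⟩ := hR.exists_pos
  obtain ⟨ρ, hρ, hRρ⟩ := Metric.eventually_nhds_iff_ball.mp hRC.bound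
  have hhalf : Tendsto (fun m : ℕ => (1 / 2 : ℝ) ^ m) atTop (𝓝 0) :=
    tendsto_pow_atTop_nhds_zero_of_lt_one (by norm_num) (by norm_num)
  have hball : ∀ᶠ m : ℕ in atTop, (1 / 2 : ℝ) ^ (3 * m) * r < ρ := by
    have hlim := (hhalf.comp (tendsto_id.const_mul_atTop' three_pos)).mul_const r
    rw [zero_mul] at hlim
    exact hlim.eventually (gt_mem_nhds hρ)
  have hsmall : ∀ᶠ m : ℕ in atTop, (1 / 2 : ℝ) ^ m * (C * r ^ 3) < δ := by
    have hlim := hhalf.mul_const (C * r ^ 3)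
    rw [zero_mul] at hlim
    exact hlim.eventually (gt_mem_nhds hδ)
  filter_upwards [hball, hsmall] with m hm hm' k hk t ht
  rw [mem_closedBall_zero_iff] at ht
  set s := dilate eProd (twoPow k)⁻¹ t
  have hs : ‖s‖ ≤ (1 / 2) ^ (3 * m) * r := (norm_dilate_twoPow_inv_le hk t).trans (by gcongr)
  calc |dilatedRemainder R (twoPow k) t| = 2 ^ (8 * m) * ‖R s‖ := by
        rw [dilatedRemainder, twoPow_mul_twoPow_of_mem_diagonalBlock hk, abs_mul,
          abs_of_pos (by positivity), Real.norm_eq_abs]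
    _ ≤ 2 ^ (8 * m) * (C * ((1 / 2) ^ (3 * m) * r) ^ 3) := by
        have h := hRρ s (mem_ball_zero_iff.mpr (hs.trans_lt hm))
        rw [norm_pow, norm_norm] at h
        gcongr
        exact h.trans (by gcongr)
    _ = (1 / 2) ^ m * (C * r ^ 3) := by
        have hpow : (2 : ℝ) ^ (8 * m) * ((1 / 2) ^ (3 * m)) ^ 3 = (1 / 2) ^ m := by
          rw [← pow_mul, show 3 * m * 3 = 8 * m + m by ring, pow_add, ← mul_assoc, ← mul_pow,
            mul_one_div_cancel two_ne_zero, one_pow, one_mul]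
        linear_combination C * r ^ 3 * hpow
    _ < δ := hm'

/-! ### Growth of the norms -/

theorem tendsto_eLpNorm_top {α ι : Type*} [MeasurableSpace α] {μ : Measure α} {l : Filter ι}
    {F : ι → α → ℝ} {c : ι → ℝ} {s : Set α} {p : ℝ≥0∞} (hs : MeasurableSet s) (hμs : μ s ≠ 0)
    (hp : p ≠ 0) (hc : Tendsto c l atTop) (hF : ∀ᶠ i in l, ∀ x ∈ s, c i ≤ F i x) :
    Tendsto (fun i => eLpNorm (F i) p μ) l (𝓝 ∞) := by
  have hind : Tendsto (fun i => ENNReal.ofReal (c i) * μ s ^ (1 / p.toReal)) l (𝓝 ∞) := by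
    have hV : μ s ^ (1 / p.toReal) ≠ 0 := by simp [ENNReal.rpow_eq_zero_iff, hμs]
    have h := ENNReal.Tendsto.mul_const (ENNReal.tendsto_ofReal_atTop.comp hc)
      (b := μ s ^ (1 / p.toReal)) (Or.inl ENNReal.top_ne_zero)
    rwa [ENNReal.top_mul hV] at h
  refine tendsto_nhds_top_mono hind ?_
  filter_upwards [hF, hc.eventually_ge_atTop 0] with i hi hci
  rw [← Real.enorm_of_nonneg hci, ← eLpNorm_indicator_const' hs hμs hp]
  refine eLpNorm_mono fun x => ?_
  by_cases hx : x ∈ s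
  · rw [indicator_of_mem hx, Real.norm_of_nonneg hci]
    exact (hi x hx).trans (le_abs_self _)
  · rw [indicator_of_notMem hx, norm_zero]
    exact norm_nonneg _

theorem eLpNorm_comp_mul_left {E : Type*} [NormedAddCommGroup E] {c : ℝ} (hc : c ≠ 0)
    (f : ℝ → E) (p : ℝ≥0∞) :
    eLpNorm (fun x => f (c * x)) p volume =
      ENNReal.ofReal |c⁻¹| ^ (1 / p).toReal * eLpNorm f p volume := by
  rw [← smul_eq_mul, ← eLpNorm_smul_measure_of_ne_zero (by simpa using hc),
    ← Real.map_volume_mul_left hc]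
  exact ((measurableEmbedding_mulLeft₀ hc).eLpNorm_map_measure).symm

theorem eLpNorm_le_of_comp_mul_left {E F : Type*} [NormedAddCommGroup E] [NormedAddCommGroup F]
    {c : ℝ} (hc : c ≠ 0) {f : ℝ → E} {g : ℝ → F} {p B : ℝ≥0∞}
    (h : eLpNorm (fun x => f (c * x)) p volume ≤ B * eLpNorm (fun x => g (c * x)) p volume) :
    eLpNorm f p volume ≤ B * eLpNorm g p volume := by
  rw [eLpNorm_comp_mul_left hc, eLpNorm_comp_mul_left hc, mul_left_comm] at h
  have hc' : ENNReal.ofReal |c⁻¹| ≠ 0 := by simpa using hc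
  exact (ENNReal.mul_le_mul_iff_right
    (ENNReal.rpow_pos (pos_iff_ne_zero.mpr hc') ENNReal.ofReal_ne_top).ne'
    (ENNReal.rpow_ne_top_of_nonneg ENNReal.toReal_nonneg ENNReal.ofReal_ne_top)).mp h

/-! ### Unboundedness -/

/-- The kernel with profile `ς` at every scale of the dyadic blocks and `0` at all other scales. -/
def dyadicKernel (ς : Euc 2 → ℝ) : (Fin 2 → ℕ) → Euc 2 → ℝ :=
  dyadicBlocks.indicator fun _ => ς

theorem sum_trunc_saddleAverage_dyadicKernel_sub (ς R : Euc 2 → ℝ) (f : ℝ → ℝ) (j : ℕ) (x : ℝ) :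
    ∑ k ∈ trunc 2 (5 * 2 ^ j), saddleAverage (scaled eProd (dyadicKernel ς k) (twoPow k)) R f x -
        ∑ k ∈ trunc 2 (4 * 2 ^ j - 1),
          saddleAverage (scaled eProd (dyadicKernel ς k) (twoPow k)) R f x =
      ∑ k ∈ diagonalBlock (2 ^ j), saddleAverage (scaled eProd ς (twoPow k)) R f x := by
  rw [sum_trunc_sub_sum_trunc]
  · refine Finset.sum_congr rfl fun k hk => ?_
    have hmem : k ∈ dyadicBlocks := mem_iUnion_of_mem j (Finset.mem_coe.mpr hk)
    rw [dyadicKernel, indicator_of_mem hmem]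
  · intro k hk
    have hzero : dyadicKernel ς k = 0 := indicator_of_notMem hk _
    simp [hzero, saddleAverage, scaled]

/-- The truncations of the operator with kernel `ς` and phase `t₀t₁ + R(t)` are bounded on `L^p`
by `C`, uniformly in the order of truncation. -/
def TruncationsBounded (p : ℝ≥0∞) (R : Euc 2 → ℝ) (ς : (Fin 2 → ℕ) → Euc 2 → ℝ) (C : ℝ≥0) : Prop :=
  ∀ M : ℕ, ∀ f : ℝ → ℝ, ContDiff ℝ (⊤ : ℕ∞) f → HasCompactSupport f →
    eLpNorm (fun x => ∑ k ∈ trunc 2 M, saddleAverage (scaled eProd (ς k) (twoPow k)) R f x)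
      p volume ≤ C * eLpNorm f p volume

section Unbounded

variable {ς R : Euc 2 → ℝ} {g : ℝ → ℝ} {p : ℝ≥0∞}

theorem TruncationsBounded.eLpNorm_sum_diagonalBlock_le {C : ℝ≥0}
    (hC : TruncationsBounded p R (dyadicKernel ς) C) (hς : Continuous ς) (hR : Continuous R)
    (hg : ContDiff ℝ (⊤ : ℕ∞) g) (hgc : HasCompactSupport g) (j : ℕ) :
    eLpNorm (fun x => ∑ k ∈ diagonalBlock (2 ^ j),
        saddleAverage (scaled eProd ς (twoPow k)) R g x) p volume ≤
      ENNReal.LpAddConst p * (C + C) * eLpNorm g p volume := by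
  have hmeas : ∀ M, AEStronglyMeasurable (fun x => ∑ k ∈ trunc 2 M,
      saddleAverage (scaled eProd (dyadicKernel ς k) (twoPow k)) R g x) volume := by
    intro M
    refine (Finset.stronglyMeasurable_fun_sum _ fun k _ => ?_).aestronglyMeasurable
    refine stronglyMeasurable_saddleAverage (continuous_scaled eProd ?_ _) hR hg.continuous
    rcases indicator_eq_zero_or_self dyadicBlocks (fun _ => ς) k with h | h <;>
      rw [dyadicKernel, h]
    exacts [continuous_zero, hς]
  simp only [← sum_trunc_saddleAverage_dyadicKernel_sub]
  refine (eLpNorm_sub_le' (hmeas _) (hmeas _) p).trans ?_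
  rw [mul_assoc, add_mul]
  gcongr
  exacts [hC _ g hg hgc, hC _ g hg hgc]

theorem TruncationsBounded.eLpNorm_sum_dilatedRemainder_le {C : ℝ≥0}
    (hC : TruncationsBounded p R (dyadicKernel ς) C) (hς : Continuous ς) (hR : Continuous R)
    (hg : ContDiff ℝ (⊤ : ℕ∞) g) (hgc : HasCompactSupport g) (j : ℕ) :
    eLpNorm (fun x => ∑ k ∈ diagonalBlock (2 ^ j),
        saddleAverage ς (dilatedRemainder R (twoPow k)) g x) p volume ≤
      ENNReal.LpAddConst p * (C + C) * eLpNorm g p volume := by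
  set lam : ℝ := 2 ^ (8 * 2 ^ j)
  have hlam : lam ≠ 0 := by positivity
  refine eLpNorm_le_of_comp_mul_left hlam ?_
  have hrescale : ∀ k ∈ diagonalBlock (2 ^ j), ∀ x,
      saddleAverage (scaled eProd ς (twoPow k)) R (fun y => g (lam * y)) x =
        saddleAverage ς (dilatedRemainder R (twoPow k)) g (lam * x) := by
    intro k hk x
    have h := saddleAverage_scaled (twoPow_pos k) ς R g x
    rwa [twoPow_mul_twoPow_of_mem_diagonalBlock hk] at h
  simp only [← Finset.sum_congr rfl fun k hk => hrescale k hk _]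
  exact hC.eLpNorm_sum_diagonalBlock_le hς hR (hg.comp (contDiff_const.mul contDiff_id))
    (hgc.comp_homeomorph (Homeomorph.mulLeft₀ lam hlam)) j

theorem tendsto_eLpNorm_sum_diagonalBlock (hς : Continuous ς) (hςc : HasCompactSupport ς)
    (hR : Continuous R) (hR0 : R =O[𝓝 0] fun t => ‖t‖ ^ 3) (hg : UniformContinuous g)
    (hpos : 0 < saddleAverage ς 0 g 0) (hp : p ≠ 0) :
    Tendsto (fun m => eLpNorm (fun x => ∑ k ∈ diagonalBlock m,
      saddleAverage ς (dilatedRemainder R (twoPow k)) g x) p volume) atTop (𝓝 ∞) := by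
  obtain ⟨c, hc, δ, hδ, hlower⟩ := exists_forall_le_saddleAverage hς hςc hg hpos
  obtain ⟨r, hr⟩ := hςc.isCompact.isBounded.subset_closedBall 0
  have hcard : Tendsto (fun m : ℕ => (diagonalBlock m).card • c) atTop atTop := by
    simp only [card_diagonalBlock]
    exact (tendsto_add_atTop_nat 1).atTop_nsmul_const hc
  refine tendsto_eLpNorm_top measurableSet_ball (measure_ball_pos volume (0 : ℝ) hδ).ne' hp hcard ?_
  filter_upwards [eventually_abs_dilatedRemainder_lt hR0 r hδ] with m hm x hx
  refine Finset.card_nsmul_le_sum _ _ _ fun k hk => ?_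
  exact hlower _ (continuous_dilatedRemainder hR _) (fun t ht => hm k hk t (hr ht)) x
    (mem_ball_zero_iff.mp hx)

theorem not_truncationsBounded_dyadicKernel (hς : Continuous ς) (hςc : HasCompactSupport ς)
    (hR : Continuous R) (hR0 : R =O[𝓝 0] fun t => ‖t‖ ^ 3) (hg : ContDiff ℝ (⊤ : ℕ∞) g)
    (hgc : HasCompactSupport g) (hpos : 0 < saddleAverage ς 0 g 0) (hp : p ≠ 0) (C : ℝ≥0) :
    ¬ TruncationsBounded p R (dyadicKernel ς) C := by
  intro hC
  have hlim := (tendsto_eLpNorm_sum_diagonalBlock hς hςc hR hR0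
    (hgc.uniformContinuous_of_continuous hg.continuous) hpos hp).comp
      (tendsto_pow_atTop_atTop_of_one_lt one_lt_two)
  have hfin : ENNReal.LpAddConst p * (C + C) * eLpNorm g p volume < ∞ := by
    have hgp : MemLp g p volume := hg.continuous.memLp_of_hasCompactSupport hgc
    exact ENNReal.mul_lt_top (ENNReal.mul_lt_top (ENNReal.LpAddConst_lt_top p)
      (ENNReal.add_lt_top.mpr ⟨ENNReal.coe_lt_top, ENNReal.coe_lt_top⟩)) hgp.eLpNorm_lt_top
  exact hfin.not_ge (le_of_tendsto' hlim fun j =>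
    hC.eLpNorm_sum_dilatedRemainder_le hς hR hg hgc j)

end Unbounded

theorem isBigO_apply_pow {N : ℕ} {l : Filter (Euc N)} (i : Fin N) (m : ℕ) :
    (fun t : Euc N => t i ^ m) =O[l] fun t => ‖t‖ ^ m := by
  refine Asymptotics.isBigO_of_le _ fun t => ?_
  rw [norm_pow, norm_pow, norm_norm]
  gcongr
  exact PiLp.norm_apply_le t i

theorem statement_16_general {a : ℝ} (ha : 0 < a) :
    ∃ ς : (Fin 2 → ℕ) → Euc 2 → ℝ, IsKernelSeq eProd a ς ∧
      ∀ R : Euc 2 → ℝ, Continuous R → R =O[𝓝 0] (fun t => ‖t‖ ^ 3) → ∀ p : ℝ≥0∞, p ≠ 0 →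
        ¬ ∃ C : ℝ≥0, TruncationsBounded p R ς C := by
  let b : ContDiffBump (0 : ℝ) := ⟨a / 4, a / 2, by positivity, by linarith⟩
  have hrad : √2 * (a / 2) < a := by
    have hsqrt : √2 < 2 := (Real.sqrt_lt' two_pos).mpr (by norm_num)
    nlinarith
  have hsupp : tsupport (oddBumpTensor b) ⊆ ball 0 a :=
    (tsupport_oddBumpTensor_subset b).trans (closedBall_subset_ball hrad)
  refine ⟨dyadicKernel (oddBumpTensor b), isKernelSeq_indicator_const (contDiff_oddBumpTensor b)
    hsupp (cancelCond_eProd_oddBumpTensor b) _, fun R hR hR0 p hp ⟨C, hC⟩ => ?_⟩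
  exact not_truncationsBounded_dyadicKernel (contDiff_oddBumpTensor b).continuous
    (hasCompactSupport_oddBumpTensor b) hR hR0 (contDiff_oddBump b).neg
    (hasCompactSupport_oddBump b).neg (saddleAverage_oddBumpTensor_pos b) hp C hC

/-- Example 3.3: for every `a > 0` there is a product kernel
`K ∈ 𝒦(2,e,a,2)` such that `f ↦ ∫ f(x − s³ − t³ − st) K(s,t) ds dt` is unbounded
on `L²(ℝ)`. -/
theorem statement_16 (a : ℝ) (ha : 0 < a) :
    ∃ ς : (Fin 2 → ℕ) → Euc 2 → ℝ, IsKernelSeq eProd a ς ∧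
      ¬ ∃ C : ℝ≥0, ∀ M : ℕ, ∀ f : ℝ → ℝ, ContDiff ℝ (⊤ : ℕ∞) f → HasCompactSupport f →
        eLpNorm
          (fun x : ℝ => ∑ k ∈ trunc 2 M,
            ∫ t : Euc 2,
              f (x - t 0 ^ 3 - t 1 ^ 3 - t 0 * t 1) * scaled eProd (ς k) (twoPow k) t)
          2 volume ≤ C * eLpNorm f 2 volume := by
  obtain ⟨ς, hς, hunbounded⟩ := statement_16_general ha
  refine ⟨ς, hς, ?_⟩
  simpa only [TruncationsBounded, saddleAverage, ← sub_sub] using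
    hunbounded (fun t => t 0 ^ 3 + t 1 ^ 3) (by fun_prop)
      ((isBigO_apply_pow 0 3).add (isBigO_apply_pow 1 3)) 2 two_ne_zero
end
end
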